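/- arXiv:1702.01766 — 3 statements merged into one kernel-verified Lean document; each statement's English description precedes it below -/
import Mathlib

section
/- Let A and B be polynomial rings over a field k in disjoint sets of variables, and let I ⊆ A and J ⊆ B be nonzero proper homogeneous ideals. Then there exist a polynomial ring S over k and a homogeneous ideal Q ⊆ S such that for all n ≥ 1: depth S/Q^n = depth A/I^n + depth B/J^n. Moreover, if I and J are monomial ideals, then Q can be chosen to be a monomial ideal. -/
/-!
Let `x` be a variable of `A = k[σ]` and `y` a variable of `B = k[τ]`, and put `R = A ⊗ B`, `z = x - y`.
The polynomial ring is `S = R/(z)`, in which `x` and `y` are identified (`exists_glue`), and `Q` is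
the image of the product `IJ`. As `Qⁿ` is the image of `IⁿJⁿ`, it suffices to prove
`depth R/(IJ + (z)) = depth A/I + depth B/J` for `I`, `J` replaced by their powers.

Let `a = depth A/I` and `b = depth B/J`.
* Regular sequences on `A/I` and on `B/J` concatenate to one on `R/(I + J) = A/I ⊗ B/J`, and socle
  elements at their ends tensor to a socle element, so `depth R/(I + J) = a + b`
  (`extVanish_tmul`, `not_extVanish_tmul`).
* As `I ≠ 0`, `a < dim A`, and `A` has the regular sequence of its variables; the same holds for
  `B`. Thus `R/I = A/I ⊗ B` and `R/J = A ⊗ B/J` have depth at least `a + b + 1`.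
* `I ∩ J = IJ` in `R` because `k` is a field (`extL_inf_extR`), and the Mayer–Vietoris sequence
  for `I`, `J` gives `depth R/IJ = a + b + 1` (`extVanish_inf`).
* `z` is regular modulo `I`, since in `(A/I)[τ]` it becomes `-y` after a substitution
  (`tmul_sub_regular`), and similarly modulo `J`; so it is regular modulo `IJ`, and the depth of
  `R/(IJ + (z))` is `a + b` (`idealDepth_inf_sup_span`).

Depth is handled through the vanishing of `Ext^i(R/m, -)`, using Rees' theorem (`extVanish_iff`).
-/

open MvPolynomial TensorProduct

/-- The `n`-th symbolic power of an ideal `Q`: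
`Q^{(n)} = ⋂_{P ∈ Min(Q)} (Q^n R_P ∩ R)`, the intersection over the minimal primes `P` of `Q`
of the contractions of `Q^n R_P` along the localization maps `R → R_P`. -/
noncomputable def symbPow {R : Type*} [CommRing R] (Q : Ideal R) (n : ℕ) : Ideal R :=
  ⨅ (P : Ideal R) (hP : P ∈ Q.minimalPrimes),
    letI : P.IsPrime := hP.1.1
    Ideal.comap (algebraMap R (Localization.AtPrime P))
      (Ideal.map (algebraMap R (Localization.AtPrime P)) (Q ^ n))

/-- The depth of a module `M` with respect to an ideal `m`: the maximal length of an
`M`-regular sequence contained in `m`. -/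
noncomputable def idealDepth {R : Type*} [CommRing R] (m : Ideal R)
    (M : Type*) [AddCommGroup M] [Module R M] : ℕ :=
  sSup {n | ∃ rs : List R, rs.length = n ∧ (∀ r ∈ rs, r ∈ m) ∧
    RingTheory.Sequence.IsRegular M rs}

/-- The maximal homogeneous ideal of a polynomial ring, generated by the variables. -/
noncomputable def maxHomIdeal (k : Type*) [CommSemiring k] (σ : Type*) :
    Ideal (MvPolynomial σ k) :=
  Ideal.span (Set.range X)

/-- An ideal of a polynomial ring is homogeneous if it contains all homogeneous components of
each of its elements. -/
def IsHomogeneousIdeal {k σ : Type*} [CommSemiring k] (I : Ideal (MvPolynomial σ k)) : Prop :=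
  ∀ f ∈ I, ∀ d : ℕ, homogeneousComponent d f ∈ I

/-- A monomial ideal: an ideal generated by monomials. -/
def IsMonomialIdeal {k σ : Type*} [CommSemiring k] (I : Ideal (MvPolynomial σ k)) : Prop :=
  ∃ S : Set (σ →₀ ℕ), I = Ideal.span ((fun s => monomial s (1 : k)) '' S)

open CategoryTheory Abelian RingTheory.Sequence

/-! ### Vanishing of Ext and short exact sequences -/

/-- `Ext^i(R/m, M) = 0` for all `i < n`. For `R` noetherian and `M` finitely generated with
`mM ≠ M` this says that the depth of `M` with respect to `m` is at least `n`. It behaves well in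
short exact sequences, which regular sequences do not. -/
def ExtVanish {R : Type} [CommRing R] (m : Ideal R) (n : ℕ)
    (M : Type) [AddCommGroup M] [Module R M] : Prop :=
  ∀ i < n, Subsingleton (Ext (ModuleCat.of R (R ⧸ m)) (ModuleCat.of R M) i)

section ses

variable {R : Type} [CommRing R] {m : Ideal R} {X Y Z : Type}
  [AddCommGroup X] [Module R X] [AddCommGroup Y] [Module R Y] [AddCommGroup Z] [Module R Z]

theorem shortExact_of_linearMap (f : X →ₗ[R] Y) (g : Y →ₗ[R] Z)
    (hf : Function.Injective f) (hfg : Function.Exact f g) (hg : Function.Surjective g) :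
    (ModuleCat.shortComplexOfCompEqZero f g hfg.linearMap_comp_eq_zero).ShortExact where
  exact := ModuleCat.shortComplex_exact _ hfg
  mono_f := by simpa [ModuleCat.mono_iff_injective] using! hf
  epi_g := by simpa [ModuleCat.epi_iff_surjective] using! hg

/-- In `0 → X → Y → Z → 0`: `depth Y ≥ min (depth X) (depth Z)`. -/
theorem ExtVanish.mid {f : X →ₗ[R] Y} {g : Y →ₗ[R] Z}
    (hf : Function.Injective f) (hfg : Function.Exact f g) (hg : Function.Surjective g)
    {n : ℕ} (hX : ExtVanish m n X) (hZ : ExtVanish m n Z) : ExtVanish m n Y := by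
  intro i hi
  have hS := shortExact_of_linearMap f g hf hfg hg
  refine subsingleton_of_forall_eq 0 fun y => ?_
  have := hZ i hi
  have := hX i hi
  obtain ⟨x, rfl⟩ := Ext.covariant_sequence_exact₂ _ hS y (Subsingleton.elim (α := Ext (ModuleCat.of R (R ⧸ m)) (ModuleCat.of R Z) i) _ _)
  rw [Subsingleton.elim (α := Ext (ModuleCat.of R (R ⧸ m)) (ModuleCat.of R X) i) x 0, Ext.zero_comp]

/-- In `0 → X → Y → Z → 0`: `depth Z ≥ min (depth X - 1) (depth Y)`. -/
theorem ExtVanish.right {f : X →ₗ[R] Y} {g : Y →ₗ[R] Z}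
    (hf : Function.Injective f) (hfg : Function.Exact f g) (hg : Function.Surjective g)
    {n : ℕ} (hX : ExtVanish m (n + 1) X) (hY : ExtVanish m n Y) : ExtVanish m n Z := by
  intro i hi
  have hS := shortExact_of_linearMap f g hf hfg hg
  refine subsingleton_of_forall_eq 0 fun z => ?_
  have := hY i hi
  have := hX (i + 1) (by omega)
  obtain ⟨y, rfl⟩ := Ext.covariant_sequence_exact₃ _ hS z rfl (Subsingleton.elim (α := Ext (ModuleCat.of R (R ⧸ m)) (ModuleCat.of R X) (i + 1)) _ _)
  rw [Subsingleton.elim (α := Ext (ModuleCat.of R (R ⧸ m)) (ModuleCat.of R Y) i) y 0, Ext.zero_comp]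

/-- In `0 → X → Y → Z → 0`: `depth X ≥ min (depth Y) (depth Z + 1)`. -/
theorem ExtVanish.left {f : X →ₗ[R] Y} {g : Y →ₗ[R] Z}
    (hf : Function.Injective f) (hfg : Function.Exact f g) (hg : Function.Surjective g)
    {n : ℕ} (hY : ExtVanish m (n + 1) Y) (hZ : ExtVanish m n Z) : ExtVanish m (n + 1) X := by
  intro i hi
  have hS := shortExact_of_linearMap f g hf hfg hg
  refine subsingleton_of_forall_eq 0 fun x => ?_
  have := hY i hi
  have hx : x.comp (Ext.mk₀ (ModuleCat.shortComplexOfCompEqZero f g hfg.linearMap_comp_eq_zero).f) (add_zero i) = 0 :=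
    Subsingleton.elim (α := Ext (ModuleCat.of R (R ⧸ m)) (ModuleCat.of R Y) i) _ _
  cases i with
  | zero =>
    have := hS.mono_f
    exact Ext.postcomp_mk₀_injective_of_mono _ (ModuleCat.shortComplexOfCompEqZero f g hfg.linearMap_comp_eq_zero).f
      (by simpa using hx)
  | succ i =>
    have := hZ i (by omega)
    obtain ⟨y, rfl⟩ := Ext.covariant_sequence_exact₁ _ hS x hx rfl
    rw [Subsingleton.elim (α := Ext (ModuleCat.of R (R ⧸ m)) (ModuleCat.of R Z) i) y 0, Ext.zero_comp]

theorem ExtVanish.mono {n p : ℕ} (h : n ≤ p) (hX : ExtVanish m p X) : ExtVanish m n X :=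
  fun i hi => hX i (hi.trans_le h)

/-- A nonzero element killed by `m` gives a nonzero map `R/m → X`, so the depth of `X` is zero. -/
theorem not_extVanish_one {u : X} (hu : u ≠ 0) (hmu : ∀ r ∈ m, r • u = 0) :
    ¬ ExtVanish m 1 X := by
  intro h
  have h0 := h 0 one_pos
  have : Subsingleton ((R ⧸ m) →ₗ[R] X) :=
    ModuleCat.homAddEquiv.symm.subsingleton_congr.mpr
      (Ext.addEquiv₀.subsingleton_congr.mp h0)
  let φ : (R ⧸ m) →ₗ[R] X := Submodule.liftQ m (LinearMap.toSpanSingleton R X u)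
    (fun r hr => by simpa using hmu r hr)
  have : φ (Submodule.Quotient.mk 1) = 0 := by rw [Subsingleton.elim φ 0]; rfl
  exact hu ((one_smul R u).symm.trans this)

end ses

/-! ### Regular sequences on cyclic modules and Rees' theorem -/

/-- `rs` is a weakly regular sequence on `R/K`, expressed through ideals: each entry is a
nonzerodivisor modulo `K` and the previous entries. The quotient of `R/K` by `rs` may vanish. -/
def RegSeq {R : Type} [CommRing R] : List R → Ideal R → Prop
  | [], _ => True
  | r :: rs, K => (∀ x, r * x ∈ K → x ∈ K) ∧ RegSeq rs (K ⊔ Ideal.span {r})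

section rees
open scoped Pointwise
variable {R : Type} [CommRing R]

/-- `(R/K)/r(R/K) ≅ R/(K + (r))`. -/
noncomputable def quotSMulTopEquiv (K : Ideal R) (r : R) :
    QuotSMulTop r (R ⧸ K) ≃ₗ[R] R ⧸ (K ⊔ Ideal.span {r}) :=
  Submodule.quotEquivOfEq _ _ (by
    rw [← Submodule.ideal_span_singleton_smul]
    have : (⊤ : Submodule R (R ⧸ K)) = Submodule.map K.mkQ ⊤ := by
      rw [Submodule.map_top, Submodule.range_mkQ]
    rw [this, ← Submodule.map_smul'']; simp) ≪≫ₗ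
  Submodule.quotientQuotientEquivQuotientSup K (Ideal.span {r})

theorem isSMulRegular_quot_iff (K : Ideal R) (r : R) :
    IsSMulRegular (R ⧸ K) r ↔ ∀ x, r * x ∈ K → x ∈ K := by
  rw [isSMulRegular_iff_right_eq_zero_of_smul]
  constructor
  · intro h x hx
    rw [← Ideal.Quotient.eq_zero_iff_mem] at hx ⊢
    exact h _ (by rw [← hx]; rfl)
  · intro h x hx
    obtain ⟨x, rfl⟩ := Ideal.Quotient.mk_surjective x
    rw [Ideal.Quotient.eq_zero_iff_mem]
    exact h x (Ideal.Quotient.eq_zero_iff_mem.mp (by rw [← hx]; rfl))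

theorem regSeq_iff (rs : List R) (K : Ideal R) : RegSeq rs K ↔ IsWeaklyRegular (R ⧸ K) rs := by
  induction rs generalizing K with
  | nil => simp [RegSeq]
  | cons r rs ih =>
    rw [isWeaklyRegular_cons_iff, RegSeq, isSMulRegular_quot_iff, ih,
      (quotSMulTopEquiv K r).isWeaklyRegular_congr]

theorem ideal_smul_top_ne {m K L : Ideal R} (hm : m ≠ ⊤) (hK : K ≤ m) (hL : L ≤ m) :
    L • (⊤ : Submodule R (R ⧸ K)) ≠ ⊤ := by
  intro h
  have : (⊤ : Submodule R (R ⧸ K)) = Submodule.map K.mkQ ⊤ := by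
    rw [Submodule.map_top, Submodule.range_mkQ]
  rw [this, ← Submodule.map_smul''] at h
  have h2 := congrArg (Submodule.comap K.mkQ) h
  simp [Submodule.comap_map_eq] at h2
  exact hm (top_le_iff.mp (h2 ▸ sup_le hL hK))

theorem isRegular_iff_regSeq {m K : Ideal R} (hm : m ≠ ⊤) (hK : K ≤ m) {rs : List R}
    (hrs : ∀ r ∈ rs, r ∈ m) : IsRegular (R ⧸ K) rs ↔ RegSeq rs K := by
  rw [isRegular_iff, regSeq_iff, and_iff_left]
  exact (ideal_smul_top_ne hm hK (Ideal.span_le.mpr hrs)).symm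

/-- Rees' theorem for cyclic modules. -/
theorem extVanish_iff [IsNoetherianRing R] {m K : Ideal R} (hm : m ≠ ⊤) (hK : K ≤ m) (n : ℕ) :
    ExtVanish m n (R ⧸ K) ↔ ∃ rs : List R, rs.length = n ∧ (∀ r ∈ rs, r ∈ m) ∧ RegSeq rs K := by
  have supp : Module.support R (R ⧸ m) = PrimeSpectrum.zeroLocus m := by
    rw [Module.support_eq_zeroLocus, Ideal.annihilator_quotient]
  have hlt : m • (⊤ : Submodule R (R ⧸ K)) < ⊤ := (ideal_smul_top_ne hm hK le_rfl).lt_top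
  constructor
  · intro h
    obtain ⟨rs, h1, h2, h3⟩ := ModuleCat.exists_isRegular_of_exists_subsingleton_ext m n
      (ModuleCat.of R (R ⧸ K)) hlt (ModuleCat.of R (R ⧸ m)) supp h
    exact ⟨rs, h1, h2, (isRegular_iff_regSeq hm hK h2).mp h3⟩
  · rintro ⟨rs, rfl, h2, h3⟩
    exact ModuleCat.subsingleton_ext_of_exists_isRegular m (ModuleCat.of R (R ⧸ m)) supp.subset
      (ModuleCat.of R (R ⧸ K)) hlt rs h2 ((isRegular_iff_regSeq hm hK h2).mpr h3)

/-- Passing to the quotient by a nonzerodivisor lowers the depth by at most one. -/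
theorem extVanish_quot_of_regular {m K : Ideal R} {r : R} (hr : ∀ x, r * x ∈ K → x ∈ K) {n : ℕ}
    (h : ExtVanish m (n + 1) (R ⧸ K)) : ExtVanish m n (R ⧸ (K ⊔ Ideal.span {r})) := by
  let f : (R ⧸ K) →ₗ[R] (R ⧸ K) := LinearMap.lsmul R (R ⧸ K) r
  let g : (R ⧸ K) →ₗ[R] R ⧸ (K ⊔ Ideal.span {r}) := Submodule.factor le_sup_left
  refine ExtVanish.right (f := f) (g := g) ((isSMulRegular_quot_iff K r).mpr hr) ?_
    (Submodule.factor_surjective _) h (h.mono (by omega))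
  intro y
  obtain ⟨y, rfl⟩ := Ideal.Quotient.mk_surjective y
  have : g (Ideal.Quotient.mk K y) = Ideal.Quotient.mk (K ⊔ Ideal.span {r}) y := rfl
  rw [this, Ideal.Quotient.eq_zero_iff_mem, sup_comm, Ideal.mem_span_singleton_sup]
  constructor
  · rintro ⟨a, b, hb, rfl⟩
    refine ⟨Ideal.Quotient.mk K a, ?_⟩
    change Ideal.Quotient.mk K (r * a) = _
    rw [Ideal.Quotient.mk_eq_mk_iff_sub_mem]
    convert K.neg_mem hb using 1; ring
  · rintro ⟨a, ha⟩
    obtain ⟨a, rfl⟩ := Ideal.Quotient.mk_surjective a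
    change Ideal.Quotient.mk K (r * a) = _ at ha
    rw [Ideal.Quotient.mk_eq_mk_iff_sub_mem] at ha
    exact ⟨a, y - r * a, by convert K.neg_mem ha using 1; ring, by ring⟩

/-- If `R/(K + (rs))` has a nonzero element `u` killed by `m`, for a regular sequence `rs` on `R/K`,
then the depth of `R/K` is at most the length of `rs`. -/
theorem not_extVanish_of_socle {m : Ideal R} (rs : List R) (K : Ideal R) (hreg : RegSeq rs K)
    {u : R} (hu : u ∉ K ⊔ Ideal.ofList rs) (hmu : ∀ r ∈ m, r * u ∈ K ⊔ Ideal.ofList rs) :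
    ¬ ExtVanish m (rs.length + 1) (R ⧸ K) := by
  induction rs generalizing K with
  | nil =>
    simp only [Ideal.ofList_nil, bot_le, sup_of_le_left] at hu hmu
    refine not_extVanish_one (u := Ideal.Quotient.mk K u) ?_ ?_
    · rwa [ne_eq, Ideal.Quotient.eq_zero_iff_mem]
    · intro r hr
      exact Ideal.Quotient.eq_zero_iff_mem.mpr (hmu r hr)
  | cons r rs ih =>
    rw [Ideal.ofList_cons, ← sup_assoc] at hu hmu
    exact fun h => ih _ hreg.2 hu hmu (extVanish_quot_of_regular hreg.1 h)

theorem idealDepth_eq [IsNoetherianRing R] {m K : Ideal R} (hm : m ≠ ⊤) (hK : K ≤ m) {d : ℕ}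
    (h1 : ExtVanish m d (R ⧸ K)) (h2 : ¬ ExtVanish m (d + 1) (R ⧸ K)) :
    idealDepth m (R ⧸ K) = d := by
  apply IsGreatest.csSup_eq
  constructor
  · obtain ⟨rs, hl, hrs, h⟩ := (extVanish_iff hm hK d).mp h1
    exact ⟨rs, hl, hrs, (isRegular_iff_regSeq hm hK hrs).mpr h⟩
  · rintro n ⟨rs, hl, hrs, h⟩
    by_contra! hlt
    exact h2 (((extVanish_iff hm hK n).mpr
      ⟨rs, hl, hrs, (isRegular_iff_regSeq hm hK hrs).mp h⟩).mono hlt)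

end rees

section regseq
variable {R : Type} [CommRing R]

theorem regSeq_append (rs ss : List R) (K : Ideal R) :
    RegSeq (rs ++ ss) K ↔ RegSeq rs K ∧ RegSeq ss (K ⊔ Ideal.ofList rs) := by
  induction rs generalizing K with
  | nil => simp [RegSeq]
  | cons r rs ih =>
    rw [List.cons_append, RegSeq, RegSeq, ih, Ideal.ofList_cons, sup_assoc, and_assoc]

/-- Each entry of a regular sequence lowers the Krull dimension by at least one. -/
theorem RegSeq.length_le_ringKrullDim (rs : List R) (K : Ideal R) (h : RegSeq rs K)
    (hne : K ⊔ Ideal.ofList rs ≠ ⊤) : (rs.length : WithBot ℕ∞) ≤ ringKrullDim (R ⧸ K) := by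
  induction rs generalizing K with
  | nil =>
    have : Nontrivial (R ⧸ K) := Ideal.Quotient.nontrivial_iff.mpr (by simpa using hne)
    simpa using ringKrullDim_nonneg_of_nontrivial
  | cons r rs ih =>
    rw [Ideal.ofList_cons, ← sup_assoc] at hne
    have h1 := ih _ h.2 hne
    have h2 : ringKrullDim (R ⧸ (K ⊔ Ideal.span {r})) + 1 ≤ ringKrullDim (R ⧸ K) := by
      refine ringKrullDim_succ_le_of_surjective
        (Ideal.Quotient.factor (le_sup_left : K ≤ K ⊔ Ideal.span {r}))
        (Ideal.Quotient.factor_surjective _) (r := Ideal.Quotient.mk K r) ?_ ?_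
      · rw [mem_nonZeroDivisors_iff_right]
        intro x hx
        obtain ⟨x, rfl⟩ := Ideal.Quotient.mk_surjective x
        rw [← map_mul, Ideal.Quotient.eq_zero_iff_mem] at hx
        exact Ideal.Quotient.eq_zero_iff_mem.mpr (h.1 x (by rwa [mul_comm]))
      · rw [Ideal.Quotient.factor_mk, Ideal.Quotient.eq_zero_iff_mem]
        exact Ideal.mem_sup_right (Ideal.mem_span_singleton_self r)
    refine le_trans ?_ h2
    push_cast [List.length_cons]
    gcongr

/-- A regular sequence of maximal length comes with a socle element `u` of the last quotient: as no
element of `m` is regular there, `Hom(R/m, R/(K + (rs)))` is nonzero. The bound `N` is what makes the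
supremum defining `idealDepth` a maximum. -/
theorem exists_max_regSeq [IsNoetherianRing R] {m K : Ideal R} (hm : m ≠ ⊤) (hK : K ≤ m) (N : ℕ)
    (hN : ∀ rs : List R, (∀ r ∈ rs, r ∈ m) → RegSeq rs K → rs.length ≤ N) :
    ∃ (rs : List R) (u : R), (∀ r ∈ rs, r ∈ m) ∧ RegSeq rs K ∧
      rs.length = idealDepth m (R ⧸ K) ∧ u ∉ K ⊔ Ideal.ofList rs ∧
      ∀ r ∈ m, r * u ∈ K ⊔ Ideal.ofList rs := by
  have hbdd : BddAbove {n | ∃ rs : List R, rs.length = n ∧ (∀ r ∈ rs, r ∈ m) ∧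
      IsRegular (R ⧸ K) rs} := by
    refine ⟨N, ?_⟩
    rintro n ⟨rs, rfl, h1, h2⟩
    exact hN rs h1 ((isRegular_iff_regSeq hm hK h1).mp h2)
  obtain ⟨rs, hl, hrs, hreg⟩ := Nat.sSup_mem (s := {n | ∃ rs : List R, rs.length = n ∧
      (∀ r ∈ rs, r ∈ m) ∧ IsRegular (R ⧸ K) rs})
    ⟨0, [], rfl, by simp, (isRegular_iff_regSeq hm hK (by simp)).mpr trivial⟩ hbdd
  rw [isRegular_iff_regSeq hm hK hrs] at hreg
  set L := K ⊔ Ideal.ofList rs with hL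
  have hnot : ¬ Subsingleton ((R ⧸ m) →ₗ[R] (R ⧸ L)) := by
    rw [IsSMulRegular.subsingleton_linearMap_iff]
    rintro ⟨r, hr, hr'⟩
    rw [Ideal.annihilator_quotient] at hr
    rw [isSMulRegular_quot_iff] at hr'
    have hrs' : ∀ x ∈ rs ++ [r], x ∈ m := by
      intro x hx
      rcases List.mem_append.mp hx with hx | hx
      · exact hrs x hx
      · simp at hx; exact hx ▸ hr
    have hreg' : RegSeq (rs ++ [r]) K := (regSeq_append _ _ _).mpr ⟨hreg, hr', trivial⟩
    have := le_csSup hbdd ⟨rs ++ [r], rfl, hrs', (isRegular_iff_regSeq hm hK hrs').mpr hreg'⟩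
    rw [← hl] at this
    simp at this
  rw [not_subsingleton_iff_nontrivial] at hnot
  obtain ⟨φ, hφ⟩ := exists_ne (0 : (R ⧸ m) →ₗ[R] (R ⧸ L))
  obtain ⟨u, hu⟩ := Ideal.Quotient.mk_surjective (φ (Ideal.Quotient.mk m 1))
  have hsmul : ∀ r : R, Ideal.Quotient.mk L (r * u) = φ (Ideal.Quotient.mk m r) := by
    intro r
    rw [map_mul, hu]
    have : Ideal.Quotient.mk m r = r • Ideal.Quotient.mk m 1 := by
      rw [← mul_one r, map_mul, mul_one]; rfl
    rw [this, map_smul]; rfl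
  refine ⟨rs, u, hrs, hreg, hl, ?_, ?_⟩
  · intro h
    apply hφ
    ext
    rw [← Ideal.Quotient.eq_zero_iff_mem, ← one_mul u, hsmul] at h
    exact h
  · intro r hr
    rw [← Ideal.Quotient.eq_zero_iff_mem, hsmul, Ideal.Quotient.eq_zero_iff_mem.mpr hr, map_zero]

/-- If `R/I` and `R/J` have larger depth than `R/(I + J)`, then
`depth R/(I ∩ J) = depth R/(I + J) + 1`. The proof splits the Mayer–Vietoris sequence
`0 → R/(I ∩ J) → R/I ⊕ R/J → R/(I + J) → 0` into two sequences involving `I/(I ∩ J)`. -/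
theorem extVanish_inf {m I J : Ideal R} {d : ℕ} (hI : ExtVanish m (d + 1) (R ⧸ I))
    (hJ : ExtVanish m (d + 1) (R ⧸ J)) (hs : ExtVanish m d (R ⧸ (I ⊔ J)))
    (hs' : ¬ ExtVanish m (d + 1) (R ⧸ (I ⊔ J))) :
    ExtVanish m (d + 1) (R ⧸ (I ⊓ J)) ∧ ¬ ExtVanish m (d + 2) (R ⧸ (I ⊓ J)) := by
  let P := ↥I ⧸ Submodule.comap (Submodule.subtype I) J
  let f₁ : P →ₗ[R] R ⧸ J := Submodule.mapQ _ J (Submodule.subtype I) le_rfl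
  let g₁ : (R ⧸ J) →ₗ[R] R ⧸ (I ⊔ J) := Submodule.factor le_sup_right
  let f₂ : P →ₗ[R] R ⧸ (I ⊓ J) := Submodule.mapQ _ (I ⊓ J) (Submodule.subtype I)
    (fun x hx => ⟨x.2, hx⟩)
  let g₂ : (R ⧸ (I ⊓ J)) →ₗ[R] R ⧸ I := Submodule.factor inf_le_left
  have hf₁ : Function.Injective f₁ := by
    rw [injective_iff_map_eq_zero]
    intro p hp
    obtain ⟨p, rfl⟩ := Submodule.mkQ_surjective _ p
    have : (p : R) ∈ J := Ideal.Quotient.eq_zero_iff_mem.mp hp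
    exact (Submodule.Quotient.mk_eq_zero _).mpr this
  have hf₂ : Function.Injective f₂ := by
    rw [injective_iff_map_eq_zero]
    intro p hp
    obtain ⟨p, rfl⟩ := Submodule.mkQ_surjective _ p
    have : (p : R) ∈ I ⊓ J := Ideal.Quotient.eq_zero_iff_mem.mp hp
    exact (Submodule.Quotient.mk_eq_zero _).mpr this.2
  have h₁ : Function.Exact f₁ g₁ := by
    intro y
    obtain ⟨y, rfl⟩ := Ideal.Quotient.mk_surjective y
    have : g₁ (Ideal.Quotient.mk J y) = Ideal.Quotient.mk (I ⊔ J) y := rfl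
    rw [this, Ideal.Quotient.eq_zero_iff_mem, Submodule.mem_sup]
    constructor
    · rintro ⟨a, ha, b, hb, rfl⟩
      refine ⟨Submodule.Quotient.mk ⟨a, ha⟩, ?_⟩
      change Ideal.Quotient.mk J a = _
      rw [Ideal.Quotient.mk_eq_mk_iff_sub_mem]
      simpa using hb
    · rintro ⟨p, hp⟩
      obtain ⟨p, rfl⟩ := Submodule.mkQ_surjective _ p
      change Ideal.Quotient.mk J (p : R) = _ at hp
      rw [Ideal.Quotient.mk_eq_mk_iff_sub_mem] at hp
      exact ⟨p, p.2, y - p, by simpa using J.neg_mem hp, by ring⟩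
  have h₂ : Function.Exact f₂ g₂ := by
    intro y
    obtain ⟨y, rfl⟩ := Ideal.Quotient.mk_surjective y
    have : g₂ (Ideal.Quotient.mk (I ⊓ J) y) = Ideal.Quotient.mk I y := rfl
    rw [this, Ideal.Quotient.eq_zero_iff_mem]
    constructor
    · intro hy
      exact ⟨Submodule.Quotient.mk ⟨y, hy⟩, rfl⟩
    · rintro ⟨p, hp⟩
      obtain ⟨p, rfl⟩ := Submodule.mkQ_surjective _ p
      change Ideal.Quotient.mk (I ⊓ J) (p : R) = _ at hp
      rw [Ideal.Quotient.mk_eq_mk_iff_sub_mem] at hp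
      simpa using I.sub_mem p.2 hp.1
  have hP : ExtVanish m (d + 1) P :=
    ExtVanish.left hf₁ h₁ (Submodule.factor_surjective _) hJ hs
  refine ⟨hP.mid hf₂ h₂ (Submodule.factor_surjective _) hI, fun h => hs' ?_⟩
  have hP' : ExtVanish m (d + 2) P :=
    ExtVanish.left hf₂ h₂ (Submodule.factor_surjective _) h hI
  exact hP'.right hf₁ h₁ (Submodule.factor_surjective _) hJ

/-- The depth of a module over a quotient ring can be computed over the original ring. -/
theorem idealDepth_comap {S : Type} [CommRing S] (φ : R →+* S) (hφ : Function.Surjective φ)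
    (m : Ideal R) (Q : Ideal S) :
    idealDepth m (R ⧸ Q.comap φ) = idealDepth (m.map φ) (S ⧸ Q) := by
  let e : (R ⧸ Q.comap φ) ≃+ (S ⧸ Q) :=
    AddEquiv.ofBijective (Ideal.quotientMap Q φ le_rfl).toAddMonoidHom
      ⟨Ideal.quotientMap_injective, Ideal.quotientMap_surjective (H := le_rfl) hφ⟩
  have he : ∀ (r : R) (x : R ⧸ Q.comap φ), e (r • x) = φ r • e x := by
    intro r x
    obtain ⟨x, rfl⟩ := Ideal.Quotient.mk_surjective x
    change Ideal.Quotient.mk Q (φ (r * x)) = Ideal.Quotient.mk Q (φ r * φ x)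
    rw [map_mul]
  have key : ∀ rs : List R, IsRegular (R ⧸ Q.comap φ) rs ↔ IsRegular (S ⧸ Q) (rs.map φ) := by
    intro rs
    refine AddEquiv.isRegular_congr (e := e) ?_
    rw [List.forall₂_map_right_iff, List.forall₂_same]
    exact fun r _ x => he r x
  unfold idealDepth
  congr 1
  ext n
  constructor
  · rintro ⟨rs, hl, hrs, h⟩
    refine ⟨rs.map φ, by simpa using hl, ?_, (key rs).mp h⟩
    simp only [List.mem_map, forall_exists_index, and_imp]
    rintro _ r hr rfl
    exact Ideal.mem_map_of_mem φ (hrs r hr)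
  · rintro ⟨ss, hl, hss, h⟩
    have : ∃ rs : List R, (∀ r ∈ rs, r ∈ m) ∧ rs.map φ = ss := by
      clear hl h
      induction ss with
      | nil => exact ⟨[], by simp, rfl⟩
      | cons s ss ih =>
        obtain ⟨rs, h1, h2⟩ := ih fun r hr => hss r (List.mem_cons_of_mem _ hr)
        obtain ⟨r, hr, hr'⟩ := (Ideal.mem_map_iff_of_surjective φ hφ).mp (hss s List.mem_cons_self)
        exact ⟨r :: rs, by simpa using ⟨hr, h1⟩, by simp [hr', h2]⟩
    obtain ⟨rs, h1, rfl⟩ := this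
    exact ⟨rs, by simpa using hl, h1, (key rs).mpr h⟩

end regseq

/-! ### Ideals and regular sequences in a tensor product over a field -/

section tensor
variable {k A B : Type} [Field k] [CommRing A] [CommRing B] [Algebra k A] [Algebra k B]

/-- The extension of an ideal of `A` to `A ⊗ B`. -/
noncomputable abbrev extL (k : Type) {A : Type} (B : Type) [Field k] [CommRing A] [CommRing B]
    [Algebra k A] [Algebra k B] (I : Ideal A) : Ideal (A ⊗[k] B) :=
  I.map (Algebra.TensorProduct.includeLeft : A →ₐ[k] A ⊗[k] B)

/-- The extension of an ideal of `B` to `A ⊗ B`. -/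
noncomputable abbrev extR (k A : Type) {B : Type} [Field k] [CommRing A] [CommRing B]
    [Algebra k A] [Algebra k B] (J : Ideal B) : Ideal (A ⊗[k] B) :=
  J.map (Algebra.TensorProduct.includeRight : B →ₐ[k] A ⊗[k] B)

theorem mem_extL_sup_extR (I : Ideal A) (J : Ideal B) (w : A ⊗[k] B) :
    w ∈ extL k B I ⊔ extR k A J ↔
      Algebra.TensorProduct.map (Ideal.Quotient.mkₐ k I) (Ideal.Quotient.mkₐ k J) w = 0 := by
  have hI : RingHom.ker (Ideal.Quotient.mkₐ k I) = I := Ideal.Quotient.mkₐ_ker k I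
  have hJ : RingHom.ker (Ideal.Quotient.mkₐ k J) = J := Ideal.Quotient.mkₐ_ker k J
  rw [← RingHom.mem_ker, Algebra.TensorProduct.map_ker _ _ (Ideal.Quotient.mkₐ_surjective k I)
    (Ideal.Quotient.mkₐ_surjective k J), hI, hJ]

/-- Multiplication by `f` on `A/I` stays injective after tensoring with `B/J`, by flatness over the
field `k`. -/
theorem regular_tmul_one {I : Ideal A} (J : Ideal B) {f : A} (hf : ∀ x, f * x ∈ I → x ∈ I)
    (w : A ⊗[k] B) (hw : (f ⊗ₜ[k] (1 : B)) * w ∈ extL k B I ⊔ extR k A J) :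
    w ∈ extL k B I ⊔ extR k A J := by
  rw [mem_extL_sup_extR] at hw ⊢
  rw [map_mul, Algebra.TensorProduct.map_tmul, map_one] at hw
  have hinj : Function.Injective (LinearMap.mulLeft k (Ideal.Quotient.mkₐ k I f)) := by
    rw [injective_iff_map_eq_zero]
    intro x hx
    obtain ⟨x, rfl⟩ := Ideal.Quotient.mk_surjective x
    exact Ideal.Quotient.eq_zero_iff_mem.mpr (hf x (Ideal.Quotient.eq_zero_iff_mem.mp hx))
  refine (injective_iff_map_eq_zero _).mp
    (Module.Flat.rTensor_preserves_injective_linearMap (M := B ⧸ J) _ hinj) _ ?_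
  rw [← hw]
  generalize Algebra.TensorProduct.map (Ideal.Quotient.mkₐ k I) (Ideal.Quotient.mkₐ k J) w = t
  induction t with
  | zero => simp
  | add x y hx hy => rw [map_add, hx, hy, mul_add]
  | tmul x y => simp

theorem regular_one_tmul (I : Ideal A) {J : Ideal B} {g : B} (hg : ∀ x, g * x ∈ J → x ∈ J)
    (w : A ⊗[k] B) (hw : ((1 : A) ⊗ₜ[k] g) * w ∈ extL k B I ⊔ extR k A J) :
    w ∈ extL k B I ⊔ extR k A J := by
  rw [mem_extL_sup_extR] at hw ⊢
  rw [map_mul, Algebra.TensorProduct.map_tmul, map_one] at hw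
  have hinj : Function.Injective (LinearMap.mulLeft k (Ideal.Quotient.mkₐ k J g)) := by
    rw [injective_iff_map_eq_zero]
    intro x hx
    obtain ⟨x, rfl⟩ := Ideal.Quotient.mk_surjective x
    exact Ideal.Quotient.eq_zero_iff_mem.mpr (hg x (Ideal.Quotient.eq_zero_iff_mem.mp hx))
  refine (injective_iff_map_eq_zero _).mp
    (Module.Flat.lTensor_preserves_injective_linearMap (M := A ⧸ I) _ hinj) _ ?_
  rw [← hw]
  generalize Algebra.TensorProduct.map (Ideal.Quotient.mkₐ k I) (Ideal.Quotient.mkₐ k J) w = t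
  induction t with
  | zero => simp
  | add x y hx hy => rw [map_add, hx, hy, mul_add]
  | tmul x y => simp

/-- A pure tensor of nonzero vectors is nonzero, as linear functionals separate points. -/
theorem tmul_notMem {I : Ideal A} {J : Ideal B} {u : A} {v : B} (hu : u ∉ I) (hv : v ∉ J) :
    u ⊗ₜ[k] v ∉ extL k B I ⊔ extR k A J := by
  rw [mem_extL_sup_extR, Algebra.TensorProduct.map_tmul]
  intro h
  have hu' : Ideal.Quotient.mkₐ k I u ≠ 0 := fun h => hu (Ideal.Quotient.eq_zero_iff_mem.mp h)
  have hv' : Ideal.Quotient.mkₐ k J v ≠ 0 := fun h => hv (Ideal.Quotient.eq_zero_iff_mem.mp h)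
  rw [ne_eq, ← Module.forall_dual_apply_eq_zero_iff k, not_forall] at hu' hv'
  obtain ⟨φ, hφ⟩ := hu'
  obtain ⟨ψ, hψ⟩ := hv'
  have := congrArg (fun t => LinearMap.mul' k k (TensorProduct.map φ ψ t)) h
  simp only [TensorProduct.map_tmul, LinearMap.mul'_apply, map_zero] at this
  exact mul_ne_zero hφ hψ this

/-- Over a field, ideals extended from the two factors are Tor-independent: their intersection is
their product. -/
theorem extL_inf_extR (I : Ideal A) (J : Ideal B) :
    extL k B I ⊓ extR k A J = extL k B I * extR k A J := by
  refine le_antisymm ?_ Ideal.mul_le_inf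
  rintro w ⟨hw1, hw2⟩
  have h1 : w ∈ (extL k B I).restrictScalars k := hw1
  rw [extL, Ideal.map_includeLeft_eq] at h1
  obtain ⟨w', rfl⟩ := h1
  have h0 : LinearMap.lTensor A (J.restrictScalars k).mkQ
      (LinearMap.rTensor B (Submodule.subtype (I.restrictScalars k)) w') = 0 := by
    have h2 : LinearMap.rTensor B (Submodule.subtype (I.restrictScalars k)) w' ∈
      (extR k A J).restrictScalars k := hw2
    rw [extR, Ideal.map_includeRight_eq] at h2
    obtain ⟨t, ht⟩ := h2
    rw [← ht, ← LinearMap.comp_apply, ← LinearMap.lTensor_comp]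
    have : (J.restrictScalars k).mkQ ∘ₗ (J.restrictScalars k).subtype = 0 := by ext; simp
    rw [this]; simp
  rw [← LinearMap.comp_apply, LinearMap.lTensor_comp_rTensor, ← LinearMap.rTensor_comp_lTensor,
    LinearMap.comp_apply] at h0
  have h3 := (injective_iff_map_eq_zero _).mp
    (Module.Flat.rTensor_preserves_injective_linearMap (M := B ⧸ J.restrictScalars k) _
      (Submodule.subtype_injective (I.restrictScalars k))) _ h0
  obtain ⟨t, rfl⟩ := (lTensor_exact (I.restrictScalars k)
    (LinearMap.exact_subtype_mkQ (J.restrictScalars k)) (Submodule.mkQ_surjective _) _).mp h3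
  clear h0 h3 hw1 hw2
  induction t with
  | zero => simp
  | add x y hx hy => rw [map_add, map_add]; exact add_mem hx hy
  | tmul x y =>
    have : (x : A) ⊗ₜ[k] (y : B) = ((x : A) ⊗ₜ[k] (1 : B)) * ((1 : A) ⊗ₜ[k] (y : B)) := by simp
    change (x : A) ⊗ₜ[k] (y : B) ∈ _
    rw [this]
    exact Ideal.mul_mem_mul (Ideal.mem_map_of_mem
      (Algebra.TensorProduct.includeLeft : A →ₐ[k] A ⊗[k] B) x.2)
      (Ideal.mem_map_of_mem (Algebra.TensorProduct.includeRight : B →ₐ[k] A ⊗[k] B) y.2)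

theorem extL_sup (I I' : Ideal A) : extL k B (I ⊔ I') = extL k B I ⊔ extL k B I' := Ideal.map_sup ..
theorem extR_sup (I I' : Ideal B) : extR k A (I ⊔ I') = extR k A I ⊔ extR k A I' := Ideal.map_sup ..

theorem extL_bot : extL k B (⊥ : Ideal A) = ⊥ := Ideal.map_bot
theorem extR_bot : extR k A (⊥ : Ideal B) = ⊥ := Ideal.map_bot

theorem extL_ofList (fs : List A) :
    extL k B (Ideal.ofList fs) = Ideal.ofList (fs.map fun f => f ⊗ₜ[k] (1 : B)) :=
  Ideal.map_ofList (Algebra.TensorProduct.includeLeft : A →ₐ[k] A ⊗[k] B).toRingHom fs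
theorem extR_ofList (gs : List B) :
    extR k A (Ideal.ofList gs) = Ideal.ofList (gs.map fun g => (1 : A) ⊗ₜ[k] g) :=
  Ideal.map_ofList (Algebra.TensorProduct.includeRight : B →ₐ[k] A ⊗[k] B).toRingHom gs

theorem extL_span_singleton (f : A) : extL k B (Ideal.span {f}) = Ideal.span {f ⊗ₜ[k] (1 : B)} := by
  rw [extL, Ideal.map_span, Set.image_singleton]; rfl
theorem extR_span_singleton (g : B) : extR k A (Ideal.span {g}) = Ideal.span {(1 : A) ⊗ₜ[k] g} := by
  rw [extR, Ideal.map_span, Set.image_singleton]; rfl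

theorem RegSeq.tmul_one (fs : List A) (I : Ideal A) (J : Ideal B) (h : RegSeq fs I) :
    RegSeq (fs.map fun f => f ⊗ₜ[k] (1 : B)) (extL k B I ⊔ extR k A J) := by
  induction fs generalizing I with
  | nil => trivial
  | cons f fs ih =>
    refine ⟨fun x => regular_tmul_one J h.1 x, ?_⟩
    convert ih _ h.2 using 1
    rw [extL_sup, extL_span_singleton, sup_right_comm]

theorem RegSeq.one_tmul (gs : List B) (I : Ideal A) (J : Ideal B) (h : RegSeq gs J) :
    RegSeq (gs.map fun g => (1 : A) ⊗ₜ[k] g) (extL k B I ⊔ extR k A J) := by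
  induction gs generalizing J with
  | nil => trivial
  | cons g gs ih =>
    refine ⟨fun x => regular_one_tmul I h.1 x, ?_⟩
    convert ih _ h.2 using 1
    rw [extR_sup, extR_span_singleton, sup_assoc]

theorem RegSeq.tmul {fs : List A} {gs : List B} {I : Ideal A} {J : Ideal B} (hf : RegSeq fs I)
    (hg : RegSeq gs J) : RegSeq ((fs.map fun f => f ⊗ₜ[k] (1 : B)) ++ gs.map fun g => (1 : A) ⊗ₜ[k] g)
      (extL k B I ⊔ extR k A J) := by
  rw [regSeq_append]
  refine ⟨RegSeq.tmul_one fs I J hf, ?_⟩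
  rw [← extL_ofList, sup_right_comm, ← extL_sup]
  exact RegSeq.one_tmul gs _ J hg

theorem tmul_one_mem {m : Ideal A} (mB : Ideal B) {f : A} (hf : f ∈ m) :
    f ⊗ₜ[k] (1 : B) ∈ extL k B m ⊔ extR k A mB :=
  Ideal.mem_sup_left (Ideal.mem_map_of_mem
      (Algebra.TensorProduct.includeLeft : A →ₐ[k] A ⊗[k] B) hf)
theorem one_tmul_mem (mA : Ideal A) {m : Ideal B} {f : B} (hf : f ∈ m) :
    (1 : A) ⊗ₜ[k] f ∈ extL k B mA ⊔ extR k A m :=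
  Ideal.mem_sup_right (Ideal.mem_map_of_mem
      (Algebra.TensorProduct.includeRight : B →ₐ[k] A ⊗[k] B) hf)

theorem sup_ext_ne_top {mA : Ideal A} {mB : Ideal B} (hA : mA ≠ ⊤) (hB : mB ≠ ⊤) :
    extL k B mA ⊔ extR k A mB ≠ ⊤ := by
  intro h
  apply tmul_notMem (k := k) ((Ideal.ne_top_iff_one _).mp hA) ((Ideal.ne_top_iff_one _).mp hB)
  rw [h]; trivial

/-- The depth `d + 1` of `R/(P ∩ Q)` given by `extVanish_inf` drops to `d` modulo a common regular
element `z`. -/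
theorem idealDepth_inf_sup_span {R : Type} [CommRing R] [IsNoetherianRing R] {m P Q : Ideal R}
    {z : R} {d : ℕ} (hm : m ≠ ⊤) (hP : P ≤ m)
    (h1 : ExtVanish m (d + 1) (R ⧸ P)) (h2 : ExtVanish m (d + 1) (R ⧸ Q))
    (h3 : ExtVanish m d (R ⧸ (P ⊔ Q))) (h4 : ¬ ExtVanish m (d + 1) (R ⧸ (P ⊔ Q)))
    (hz : z ∈ m) (hzP : ∀ w, z * w ∈ P → w ∈ P) (hzQ : ∀ w, z * w ∈ Q → w ∈ Q) :
    idealDepth m (R ⧸ (P ⊓ Q ⊔ Ideal.span {z})) = d := by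
  obtain ⟨h5, h6⟩ := extVanish_inf h1 h2 h3 h4
  have hPQ : P ⊓ Q ≤ m := inf_le_left.trans hP
  have hzreg : ∀ w, z * w ∈ P ⊓ Q → w ∈ P ⊓ Q := fun w hw => ⟨hzP w hw.1, hzQ w hw.2⟩
  have hKz : P ⊓ Q ⊔ Ideal.span {z} ≤ m :=
    sup_le hPQ ((Ideal.span_singleton_le_iff_mem _).mpr hz)
  refine idealDepth_eq hm hKz (extVanish_quot_of_regular hzreg h5) fun h => h6 ?_
  obtain ⟨rs, hl, hrs, hreg⟩ := (extVanish_iff hm hKz _).mp h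
  exact (extVanish_iff hm hPQ _).mpr ⟨z :: rs, by simp [hl], by simpa using ⟨hz, hrs⟩, hzreg, hreg⟩

theorem mem_of_mem_tmul_append {mA : Ideal A} {mB : Ideal B} {as : List A} {bs : List B}
    (ha : ∀ f ∈ as, f ∈ mA) (hb : ∀ f ∈ bs, f ∈ mB) :
    ∀ r ∈ (as.map fun f => f ⊗ₜ[k] (1 : B)) ++ bs.map fun g => (1 : A) ⊗ₜ[k] g,
      r ∈ extL k B mA ⊔ extR k A mB := by
  intro r hr
  rcases List.mem_append.mp hr with hr | hr
  · obtain ⟨f, hf, rfl⟩ := List.mem_map.mp hr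
    exact tmul_one_mem mB (ha f hf)
  · obtain ⟨f, hf, rfl⟩ := List.mem_map.mp hr
    exact one_tmul_mem mA (hb f hf)

/-- The tensor product of socle elements is a socle element. -/
theorem mul_tmul_mem_of_mem {mA I : Ideal A} {mB J : Ideal B} {u : A} {v : B}
    (hmu : ∀ r ∈ mA, r * u ∈ I) (hmv : ∀ r ∈ mB, r * v ∈ J)
    (r : A ⊗[k] B) (hr : r ∈ extL k B mA ⊔ extR k A mB) :
    r * (u ⊗ₜ[k] v) ∈ extL k B I ⊔ extR k A J := by
  suffices h : extL k B mA ⊔ extR k A mB ≤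
      Submodule.comap (LinearMap.mulRight (A ⊗[k] B) (u ⊗ₜ[k] v)) (extL k B I ⊔ extR k A J) from
    h hr
  refine sup_le (Ideal.span_le.mpr ?_) (Ideal.span_le.mpr ?_)
  · rintro _ ⟨r, hr, rfl⟩
    change (r ⊗ₜ[k] (1 : B)) * (u ⊗ₜ[k] v) ∈ extL k B I ⊔ extR k A J
    have : (r ⊗ₜ[k] (1 : B)) * (u ⊗ₜ[k] v) =
      ((1 : A) ⊗ₜ[k] v) * ((r * u) ⊗ₜ[k] (1 : B)) := by simp
    rw [this]
    exact Ideal.mul_mem_left _ _ (tmul_one_mem _ (hmu r hr))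
  · rintro _ ⟨r, hr, rfl⟩
    change ((1 : A) ⊗ₜ[k] r) * (u ⊗ₜ[k] v) ∈ extL k B I ⊔ extR k A J
    have : ((1 : A) ⊗ₜ[k] r) * (u ⊗ₜ[k] v) =
      (u ⊗ₜ[k] (1 : B)) * ((1 : A) ⊗ₜ[k] (r * v)) := by simp
    rw [this]
    exact Ideal.mul_mem_left _ _ (one_tmul_mem _ (hmv r hr))

/-- `depth (A/I ⊗ B/J) ≥ depth A/I + depth B/J`, in terms of regular sequences `fs`, `gs`. -/
theorem extVanish_tmul [IsNoetherianRing (A ⊗[k] B)] {mA I : Ideal A} {mB J : Ideal B}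
    (hmA : mA ≠ ⊤) (hmB : mB ≠ ⊤) (hI : I ≤ mA) (hJ : J ≤ mB)
    {fs : List A} {gs : List B} (hfs : RegSeq fs I) (hgs : RegSeq gs J)
    (hfm : ∀ f ∈ fs, f ∈ mA) (hgm : ∀ f ∈ gs, f ∈ mB) :
    ExtVanish (extL k B mA ⊔ extR k A mB) (fs.length + gs.length)
      ((A ⊗[k] B) ⧸ (extL k B I ⊔ extR k A J)) :=
  (extVanish_iff (sup_ext_ne_top hmA hmB) (sup_le_sup (Ideal.map_mono hI) (Ideal.map_mono hJ))
    _).mpr ⟨_, by simp, mem_of_mem_tmul_append hfm hgm, hfs.tmul hgs⟩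

/-- `depth (A/I ⊗ B/J) ≤ depth A/I + depth B/J`, in terms of socle elements `u`, `v` at the end of
the regular sequences `fs`, `gs`. -/
theorem not_extVanish_tmul {mA I : Ideal A} {mB J : Ideal B}
    {fs : List A} {gs : List B} {u : A} {v : B}
    (hfs : RegSeq fs I) (hgs : RegSeq gs J)
    (hu : u ∉ I ⊔ Ideal.ofList fs) (hv : v ∉ J ⊔ Ideal.ofList gs)
    (hmu : ∀ r ∈ mA, r * u ∈ I ⊔ Ideal.ofList fs) (hmv : ∀ r ∈ mB, r * v ∈ J ⊔ Ideal.ofList gs) :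
    ¬ ExtVanish (extL k B mA ⊔ extR k A mB) (fs.length + gs.length + 1)
      ((A ⊗[k] B) ⧸ (extL k B I ⊔ extR k A J)) := by
  have hK : extL k B I ⊔ extR k A J ⊔ Ideal.ofList ((fs.map fun f => f ⊗ₜ[k] (1 : B)) ++
      gs.map fun g => (1 : A) ⊗ₜ[k] g) =
      extL k B (I ⊔ Ideal.ofList fs) ⊔ extR k A (J ⊔ Ideal.ofList gs) := by
    rw [Ideal.ofList_append, ← extL_ofList, ← extR_ofList, extL_sup, extR_sup, sup_sup_sup_comm]
  have := not_extVanish_of_socle (m := extL k B mA ⊔ extR k A mB) _ _ (hfs.tmul (k := k) hgs)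
    (u := u ⊗ₜ v) (by rw [hK]; exact tmul_notMem hu hv)
    (by rw [hK]; exact mul_tmul_mem_of_mem hmu hmv)
  rwa [List.length_append, List.length_map, List.length_map] at this

/-- The additivity of depth for `I` and `J` in `A ⊗ B` modulo `IJ + (z)`. The regular sequences `xs`
and `ys` on `A` and `B` witness `depth A > depth A/I` and `depth B > depth B/J`; they make
`A/I ⊗ B` and `A ⊗ B/J` deeper than `A/I ⊗ B/J`. -/
theorem idealDepth_mul_ext [IsNoetherianRing (A ⊗[k] B)] {mA I : Ideal A} {mB J : Ideal B}
    (hmA : mA ≠ ⊤) (hmB : mB ≠ ⊤) (hI : I ≤ mA) (hJ : J ≤ mB)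
    {fs xs : List A} {gs ys : List B} {u : A} {v : B}
    (hfs : RegSeq fs I) (hgs : RegSeq gs J) (hxs : RegSeq xs ⊥) (hys : RegSeq ys ⊥)
    (hfm : ∀ f ∈ fs, f ∈ mA) (hgm : ∀ f ∈ gs, f ∈ mB)
    (hxm : ∀ f ∈ xs, f ∈ mA) (hym : ∀ f ∈ ys, f ∈ mB)
    (hu : u ∉ I ⊔ Ideal.ofList fs) (hv : v ∉ J ⊔ Ideal.ofList gs)
    (hmu : ∀ r ∈ mA, r * u ∈ I ⊔ Ideal.ofList fs) (hmv : ∀ r ∈ mB, r * v ∈ J ⊔ Ideal.ofList gs)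
    (hxl : fs.length < xs.length) (hyl : gs.length < ys.length)
    {z : A ⊗[k] B} (hz : z ∈ extL k B mA ⊔ extR k A mB)
    (hzI : ∀ w, z * w ∈ extL k B I → w ∈ extL k B I)
    (hzJ : ∀ w, z * w ∈ extR k A J → w ∈ extR k A J) :
    idealDepth (extL k B mA ⊔ extR k A mB)
      ((A ⊗[k] B) ⧸ (extL k B I * extR k A J ⊔ Ideal.span {z})) = fs.length + gs.length := by
  rw [← extL_inf_extR]
  refine idealDepth_inf_sup_span (sup_ext_ne_top hmA hmB)
    ((Ideal.map_mono hI).trans le_sup_left) ?_ ?_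
    (extVanish_tmul hmA hmB hI hJ hfs hgs hfm hgm)
    (not_extVanish_tmul hfs hgs hu hv hmu hmv) hz hzI hzJ
  · have := extVanish_tmul (k := k) hmA hmB hI bot_le hfs hys hfm hym
    rw [extR_bot, sup_bot_eq] at this
    exact this.mono (by omega)
  · have := extVanish_tmul (k := k) hmA hmB bot_le hJ hxs hgs hxm hgm
    rw [extL_bot, bot_sup_eq] at this
    exact this.mono (by omega)

end tensor

/-! ### Polynomial rings -/

section poly
variable {k : Type} [Field k]

/-- The extension of `I` is the kernel of `A ⊗ k[τ] → (A/I)[τ]`. -/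
theorem ker_map_algebraTensor {A τ : Type} [CommRing A] [Algebra k A] (I : Ideal A)
    (w : A ⊗[k] MvPolynomial τ k) :
    w ∈ extL k (MvPolynomial τ k) I ↔
      algebraTensorAlgEquiv (σ := τ) k (A ⧸ I)
        (Algebra.TensorProduct.map (Ideal.Quotient.mkₐ k I)
          (AlgHom.id k (MvPolynomial τ k)) w) = 0 := by
  have hI : RingHom.ker (Ideal.Quotient.mkₐ k I) = I := Ideal.Quotient.mkₐ_ker k I
  rw [EmbeddingLike.map_eq_zero_iff, ← RingHom.mem_ker,
    Algebra.TensorProduct.map_ker _ _ (Ideal.Quotient.mkₐ_surjective k I) Function.surjective_id, hI]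
  have : RingHom.ker (AlgHom.id k (MvPolynomial τ k)) = ⊥ := by ext; simp [RingHom.mem_ker]
  rw [this, Ideal.map_bot, sup_bot_eq]

/-- The substitution `y ↦ y + c` turns `c - y` into `-y`. -/
theorem C_sub_X_regular {D τ : Type} [CommRing D] (c : D) (y : τ) (p : MvPolynomial τ D)
    (hp : (C c - X y) * p = 0) : p = 0 := by
  classical
  let θ : MvPolynomial τ D →ₐ[D] MvPolynomial τ D := aeval fun t => X t + if t = y then C c else 0
  let θ' : MvPolynomial τ D →ₐ[D] MvPolynomial τ D := aeval fun t => X t - if t = y then C c else 0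
  have h : θ'.comp θ = AlgHom.id D _ := by
    ext t : 1
    by_cases ht : t = y <;> simp [θ, θ', ht]
  have h1 := congrArg θ hp
  have h2 : θ (C c - X y) = - X y := by
    simp [θ]
  rw [map_mul, h2, map_zero, neg_mul, neg_eq_zero] at h1
  have h3 : θ p = 0 := (isRegular_X (R := D) (n := y)).left (by simpa using h1)
  have := congrArg θ' h3
  rw [← AlgHom.comp_apply, h] at this
  simpa using this

theorem tmul_sub_regular {A τ : Type} [CommRing A] [Algebra k A] (I : Ideal A) (a : A) (y : τ)
    (w : A ⊗[k] MvPolynomial τ k)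
    (hw : (a ⊗ₜ[k] 1 - 1 ⊗ₜ[k] X y) * w ∈ extL k (MvPolynomial τ k) I) :
    w ∈ extL k (MvPolynomial τ k) I := by
  rw [ker_map_algebraTensor] at hw ⊢
  rw [map_mul, map_mul] at hw
  refine C_sub_X_regular (Ideal.Quotient.mkₐ k I a) y _ ?_
  convert hw using 2
  simp [algebraTensorAlgEquiv_tmul, Algebra.smul_def]

theorem mem_extR_iff_comm {A B : Type} [CommRing A] [Algebra k A] [CommRing B] [Algebra k B]
    (J : Ideal B) (w : A ⊗[k] B) :
    w ∈ extR k A J ↔ Algebra.TensorProduct.comm k A B w ∈ extL k A J := by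
  have h1 : extR k A J ≤ (extL k A J).comap (Algebra.TensorProduct.comm k A B) := by
    refine Ideal.map_le_iff_le_comap.mpr fun b hb => ?_
    exact Ideal.mem_map_of_mem (Algebra.TensorProduct.includeLeft : B →ₐ[k] B ⊗[k] A) hb
  have h2 : extL k A J ≤ (extR k A J).comap (Algebra.TensorProduct.comm k B A) := by
    refine Ideal.map_le_iff_le_comap.mpr fun b hb => ?_
    exact Ideal.mem_map_of_mem (Algebra.TensorProduct.includeRight : B →ₐ[k] A ⊗[k] B) hb
  refine ⟨fun h => h1 h, fun h => ?_⟩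
  have h3 : Algebra.TensorProduct.comm k B A (Algebra.TensorProduct.comm k A B w) ∈ extR k A J :=
    h2 h
  rwa [← Algebra.TensorProduct.comm_symm, AlgEquiv.symm_apply_apply] at h3

theorem sub_tmul_regular {B σ : Type} [CommRing B] [Algebra k B] (J : Ideal B) (b : B) (x : σ)
    (w : MvPolynomial σ k ⊗[k] B)
    (hw : (X x ⊗ₜ[k] 1 - 1 ⊗ₜ[k] b) * w ∈ extR k (MvPolynomial σ k) J) :
    w ∈ extR k (MvPolynomial σ k) J := by
  rw [mem_extR_iff_comm] at hw ⊢
  refine tmul_sub_regular J b x _ ?_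
  rw [← neg_mem_iff, ← neg_mul]
  simpa using hw

instance {σ τ : Type} [Finite σ] [Finite τ] :
    IsNoetherianRing (MvPolynomial σ k ⊗[k] MvPolynomial τ k) :=
  isNoetherianRing_of_ringEquiv _
    (algebraTensorAlgEquiv (σ := τ) k (MvPolynomial σ k)).symm.toRingEquiv

section vars
variable {σ : Type}

theorem mem_maxHomIdeal_iff (f : MvPolynomial σ k) : f ∈ maxHomIdeal k σ ↔ constantCoeff f = 0 := by
  rw [maxHomIdeal, ← Set.image_univ, mem_ideal_span_X_image, constantCoeff_eq]
  constructor
  · intro h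
    by_contra h0
    obtain ⟨i, -, hi⟩ := h 0 (mem_support_iff.mpr h0)
    exact hi rfl
  · intro h m hm
    have : m ≠ 0 := by rintro rfl; exact mem_support_iff.mp hm h
    obtain ⟨i, hi⟩ := Finsupp.ne_iff.mp this
    exact ⟨i, trivial, hi⟩

theorem maxHomIdeal_ne_top : maxHomIdeal k σ ≠ ⊤ := by
  rw [Ideal.ne_top_iff_one, mem_maxHomIdeal_iff]; simp

/-- A homogeneous ideal with an element of nonzero constant term contains that term, a unit. -/
theorem le_maxHomIdeal {I : Ideal (MvPolynomial σ k)} (h : I ≠ ⊤) (hI : IsHomogeneousIdeal I) :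
    I ≤ maxHomIdeal k σ := by
  intro f hf
  rw [mem_maxHomIdeal_iff]
  by_contra hc
  apply h
  have := hI f hf 0
  rw [homogeneousComponent_zero] at this
  exact Ideal.eq_top_of_isUnit_mem _ this ((isUnit_iff_ne_zero.mpr hc).map C)

/-- A nonzero `K` gives `dim k[σ]/K < dim k[σ] = |σ|`, which bounds the length of regular sequences
on `k[σ]/K`. -/
theorem regSeq_length_lt [Fintype σ] {K : Ideal (MvPolynomial σ k)} (hK : K ≠ ⊥)
    (hKm : K ≤ maxHomIdeal k σ) (rs : List (MvPolynomial σ k)) (hrs : ∀ r ∈ rs, r ∈ maxHomIdeal k σ)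
    (h : RegSeq rs K) : rs.length < Fintype.card σ := by
  have h1 := h.length_le_ringKrullDim rs K (ne_top_of_le_ne_top maxHomIdeal_ne_top
    (sup_le hKm (Ideal.span_le.mpr hrs)))
  obtain ⟨f, hf, hf0⟩ := Submodule.exists_mem_ne_zero_of_ne_bot hK
  have h2 : ringKrullDim (MvPolynomial σ k ⧸ K) + 1 ≤ ringKrullDim (MvPolynomial σ k) :=
    ringKrullDim_succ_le_of_surjective (Ideal.Quotient.mk K) Ideal.Quotient.mk_surjective
      (r := f) (mem_nonZeroDivisors_of_ne_zero hf0) (Ideal.Quotient.eq_zero_iff_mem.mpr hf)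
  rw [MvPolynomial.ringKrullDim_of_isNoetherianRing, ringKrullDim_eq_zero_of_field, zero_add] at h2
  have h3 : ((rs.length + 1 : ℕ) : WithBot ℕ∞) ≤ (Fintype.card σ : ℕ) := by
    refine le_trans ?_ (h2.trans (by simp))
    push_cast
    gcongr
  exact_mod_cast h3

/-- The variables form a regular sequence. -/
theorem regSeq_vars [Fintype σ] : ∃ xs : List (MvPolynomial σ k), (∀ f ∈ xs, f ∈ maxHomIdeal k σ) ∧
    RegSeq xs ⊥ ∧ xs.length = Fintype.card σ := by
  classical
  have key : ∀ (l : List σ) (s : Set σ), l.Nodup → (∀ i ∈ l, i ∉ s) →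
      RegSeq (l.map (X : σ → MvPolynomial σ k)) (Ideal.span (X '' s)) := by
    intro l
    induction l with
    | nil => intros; trivial
    | cons i l ih =>
      intro s hl hs
      rw [List.nodup_cons] at hl
      refine ⟨?_, ?_⟩
      · intro f hf
        rw [mem_ideal_span_X_image] at hf ⊢
        intro m hm
        have : m + Finsupp.single i 1 ∈ (X i * f).support := by
          rw [mem_support_iff, mul_comm, coeff_mul_X]; exact mem_support_iff.mp hm
        obtain ⟨j, hj, h⟩ := hf _ this
        refine ⟨j, hj, ?_⟩
        have hne : i ≠ j := fun h => hs i List.mem_cons_self (h ▸ hj)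
        simpa [Finsupp.single_apply, hne] using h
      · have := ih (s ∪ {i}) hl.2 (by
          intro j hj
          rw [Set.mem_union, not_or]
          exact ⟨hs j (List.mem_cons_of_mem _ hj), fun h => hl.1 (h ▸ hj)⟩)
        rwa [Set.image_union, Set.image_singleton, Ideal.span_union] at this
  refine ⟨Finset.univ.toList.map X, ?_, ?_, by simp⟩
  · intro f hf
    obtain ⟨i, -, rfl⟩ := List.mem_map.mp hf
    exact Ideal.subset_span ⟨i, rfl⟩
  · simpa using key Finset.univ.toList ∅ (Finset.nodup_toList _) (by simp)

end vars
end poly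

/-! ### Homogeneous and monomial ideals -/

section homog
attribute [local instance] MvPolynomial.gradedAlgebra
variable {k : Type} [Field k] {σ τ υ : Type}

theorem isHomogeneousIdeal_iff {I : Ideal (MvPolynomial σ k)} :
    IsHomogeneousIdeal I ↔ I.IsHomogeneous (homogeneousSubmodule σ k) :=
  ⟨fun h d f hf => by
    rw [← DirectSum.Decomposition.decompose'_eq, decomposition.decompose'_apply]
    exact h f hf d,
   fun h f hf d => by
    have := h d hf
    rwa [← DirectSum.Decomposition.decompose'_eq, decomposition.decompose'_apply] at this⟩

theorem IsHomogeneousIdeal.map_rename {I : Ideal (MvPolynomial σ k)} (hI : IsHomogeneousIdeal I)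
    (i : σ → υ) : IsHomogeneousIdeal (I.map (rename i : MvPolynomial σ k →ₐ[k] MvPolynomial υ k)) := by
  have h : I = Ideal.span {f | f ∈ I ∧ ∃ d, f.IsHomogeneous d} := by
    refine le_antisymm (fun f hf => ?_) (Ideal.span_le.mpr fun f hf => hf.1)
    rw [← sum_homogeneousComponent f]
    exact sum_mem fun d _ => Ideal.subset_span ⟨hI f hf d, d, homogeneousComponent_isHomogeneous d f⟩
  rw [h, Ideal.map_span, isHomogeneousIdeal_iff]
  refine Ideal.homogeneous_span _ _ ?_
  rintro _ ⟨f, ⟨-, d, hd⟩, rfl⟩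
  exact ⟨d, hd.rename_isHomogeneous⟩

theorem IsHomogeneousIdeal.mul {I J : Ideal (MvPolynomial σ k)} (hI : IsHomogeneousIdeal I)
    (hJ : IsHomogeneousIdeal J) : IsHomogeneousIdeal (I * J) := by
  rw [isHomogeneousIdeal_iff] at *
  exact hI.mul hJ

theorem IsMonomialIdeal.map_rename {I : Ideal (MvPolynomial σ k)} (hI : IsMonomialIdeal I)
    (i : σ → υ) : IsMonomialIdeal (I.map (rename i : MvPolynomial σ k →ₐ[k] MvPolynomial υ k)) := by
  obtain ⟨S, rfl⟩ := hI
  refine ⟨Finsupp.mapDomain i '' S, ?_⟩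
  rw [Ideal.map_span, Set.image_image, Set.image_image]
  simp only [rename_monomial]

theorem IsMonomialIdeal.mul {I J : Ideal (MvPolynomial σ k)} (hI : IsMonomialIdeal I)
    (hJ : IsMonomialIdeal J) : IsMonomialIdeal (I * J) := by
  obtain ⟨S, rfl⟩ := hI
  obtain ⟨T, rfl⟩ := hJ
  refine ⟨Set.image2 (· + ·) S T, ?_⟩
  rw [Ideal.span_mul_span', ← Set.image2_mul, Set.image2_image_left, Set.image2_image_right,
    Set.image_image2]
  simp only [monomial_mul, one_mul]

end homog

/-! ### Identifying two variables -/

section glue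
variable {k : Type} [Field k] {σ τ : Type}

theorem exists_var {I : Ideal (MvPolynomial σ k)} (h : I ≠ ⊥) (h' : I ≤ maxHomIdeal k σ) :
    Nonempty σ := by
  by_contra hσ
  rw [not_nonempty_iff] at hσ
  apply h
  rw [eq_bot_iff]
  refine h'.trans ?_
  simp [maxHomIdeal, Set.range_eq_empty]

variable [Fintype σ] [Fintype τ]

/-- The quotient of `k[σ] ⊗ k[τ]` by `x - y` is the polynomial ring on `σ ⊔ (τ \ {y})`; the quotient
map renames variables and sends `y` to `x`. -/
theorem exists_glue (k : Type) [Field k] (x : σ) (y : τ) :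
    ∃ (s : ℕ) (i : σ → Fin s) (j : τ → Fin s),
      (∀ u, (∃ a, i a = u) ∨ ∃ b, j b = u) ∧
      Function.Surjective (Algebra.TensorProduct.productMap
        (rename i : MvPolynomial σ k →ₐ[k] MvPolynomial (Fin s) k) (rename j)) ∧
      RingHom.ker (Algebra.TensorProduct.productMap
        (rename i : MvPolynomial σ k →ₐ[k] MvPolynomial (Fin s) k) (rename j)) =
        Ideal.span {X x ⊗ₜ[k] 1 - 1 ⊗ₜ[k] X y} := by
  classical
  let e : σ ⊕ {t : τ // t ≠ y} ≃ Fin (Fintype.card (σ ⊕ {t : τ // t ≠ y})) := Fintype.equivFin _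
  let i : σ → Fin (Fintype.card (σ ⊕ {t : τ // t ≠ y})) := fun a => e (Sum.inl a)
  let j : τ → Fin (Fintype.card (σ ⊕ {t : τ // t ≠ y})) := fun t =>
    if h : t = y then e (Sum.inl x) else e (Sum.inr ⟨t, h⟩)
  let ι : MvPolynomial (Fin (Fintype.card (σ ⊕ {t : τ // t ≠ y}))) k →ₐ[k]
      MvPolynomial σ k ⊗[k] MvPolynomial τ k :=
    aeval fun u => Sum.elim (fun a => X a ⊗ₜ[k] 1) (fun t => 1 ⊗ₜ[k] X t.1) (e.symm u)
  let φ := Algebra.TensorProduct.productMap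
        (rename i : MvPolynomial σ k →ₐ[k] MvPolynomial _ k) (rename j)
  have hj : ∀ t : {t : τ // t ≠ y}, j t = e (Sum.inr t) := fun t => by simp [j, t.2]
  have h1 : φ.comp ι = AlgHom.id k _ := by
    ext u : 1
    obtain ⟨u, rfl⟩ := e.surjective u
    rcases u with a | t
    · simp [φ, ι, i]
    · simp [φ, ι, hj]
  let z : MvPolynomial σ k ⊗[k] MvPolynomial τ k := X x ⊗ₜ[k] 1 - 1 ⊗ₜ[k] X y
  have hz : φ z = 0 := by simp [φ, z, i, j]
  have h2 : (Ideal.Quotient.mkₐ k (Ideal.span {z})).comp (ι.comp φ) =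
      Ideal.Quotient.mkₐ k (Ideal.span {z}) := by
    apply Algebra.TensorProduct.ext
    · ext a : 1
      simp [φ, ι, i]
    · ext t : 1
      by_cases ht : t = y
      · subst ht
        have : ι (φ (1 ⊗ₜ[k] X t)) = X x ⊗ₜ[k] 1 := by simp [φ, ι, j]
        change Ideal.Quotient.mk _ (ι (φ (1 ⊗ₜ[k] X t))) = Ideal.Quotient.mk _ (1 ⊗ₜ[k] X t)
        rw [this, Ideal.Quotient.mk_eq_mk_iff_sub_mem]
        exact Ideal.mem_span_singleton_self _
      · have := hj ⟨t, ht⟩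
        simp only at this
        simp [φ, ι, this]
  refine ⟨_, i, j, ?_, fun p => ⟨ι p, DFunLike.congr_fun h1 p⟩, le_antisymm ?_ ?_⟩
  · intro u
    obtain ⟨u, rfl⟩ := e.surjective u
    rcases u with a | t
    · exact Or.inl ⟨a, rfl⟩
    · exact Or.inr ⟨t, hj t⟩
  · intro w hw
    have h3 : φ w = 0 := hw
    have h4 := DFunLike.congr_fun h2 w
    rw [AlgHom.comp_apply, AlgHom.comp_apply, h3, map_zero, map_zero] at h4
    exact Ideal.Quotient.eq_zero_iff_mem.mp h4.symm
  · rw [Ideal.span_singleton_le_iff_mem]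
    exact hz

/-- `idealDepth_mul_ext` for `z = x - y`. -/
theorem idealDepth_fibre {I : Ideal (MvPolynomial σ k)} {J : Ideal (MvPolynomial τ k)}
    (hI0 : I ≠ ⊥) (hJ0 : J ≠ ⊥) (hI : I ≤ maxHomIdeal k σ) (hJ : J ≤ maxHomIdeal k τ)
    (x : σ) (y : τ) :
    idealDepth (extL k (MvPolynomial τ k) (maxHomIdeal k σ) ⊔
        extR k (MvPolynomial σ k) (maxHomIdeal k τ))
      ((MvPolynomial σ k ⊗[k] MvPolynomial τ k) ⧸
        (extL k (MvPolynomial τ k) I * extR k (MvPolynomial σ k) J ⊔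
          Ideal.span {X x ⊗ₜ[k] 1 - 1 ⊗ₜ[k] X y})) =
      idealDepth (maxHomIdeal k σ) (MvPolynomial σ k ⧸ I) +
      idealDepth (maxHomIdeal k τ) (MvPolynomial τ k ⧸ J) := by
  obtain ⟨fs, u, hfm, hfs, hfl, hu, hmu⟩ := exists_max_regSeq maxHomIdeal_ne_top hI
    (Fintype.card σ) fun rs h h' => (regSeq_length_lt hI0 hI rs h h').le
  obtain ⟨gs, v, hgm, hgs, hgl, hv, hmv⟩ := exists_max_regSeq maxHomIdeal_ne_top hJ
    (Fintype.card τ) fun rs h h' => (regSeq_length_lt hJ0 hJ rs h h').le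
  obtain ⟨xs, hxm, hxs, hxl⟩ := regSeq_vars (k := k) (σ := σ)
  obtain ⟨ys, hym, hys, hyl⟩ := regSeq_vars (k := k) (σ := τ)
  rw [← hfl, ← hgl]
  exact idealDepth_mul_ext maxHomIdeal_ne_top maxHomIdeal_ne_top hI hJ hfs hgs hxs hys hfm hgm
    hxm hym hu hv hmu hmv (hxl ▸ regSeq_length_lt hI0 hI fs hfm hfs)
    (hyl ▸ regSeq_length_lt hJ0 hJ gs hgm hgs)
    (sub_mem (tmul_one_mem _ (Ideal.subset_span ⟨x, rfl⟩))
      (one_tmul_mem _ (Ideal.subset_span ⟨y, rfl⟩)))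
    (tmul_sub_regular I (X x) y) (sub_tmul_regular J (X y) x)

/-- The ideals `I` and `J` multiply, after identifying one variable of each ring, to an ideal with
additive depth function. Powers commute with all the extensions, so the one-power statement
`idealDepth_fibre` suffices. -/
theorem exists_idealDepth_add (I : Ideal (MvPolynomial σ k)) (J : Ideal (MvPolynomial τ k))
    (hI0 : I ≠ ⊥) (hJ0 : J ≠ ⊥) (hI : I ≤ maxHomIdeal k σ) (hJ : J ≤ maxHomIdeal k τ) :
    ∃ (s : ℕ) (i : σ → Fin s) (j : τ → Fin s), ∀ n : ℕ, 1 ≤ n →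
      idealDepth (maxHomIdeal k (Fin s)) (MvPolynomial (Fin s) k ⧸
        (I.map (rename i : MvPolynomial σ k →ₐ[k] MvPolynomial (Fin s) k) *
          J.map (rename j : MvPolynomial τ k →ₐ[k] MvPolynomial (Fin s) k)) ^ n) =
        idealDepth (maxHomIdeal k σ) (MvPolynomial σ k ⧸ I ^ n) +
        idealDepth (maxHomIdeal k τ) (MvPolynomial τ k ⧸ J ^ n) := by
  obtain ⟨x⟩ := exists_var hI0 hI
  obtain ⟨y⟩ := exists_var hJ0 hJ
  obtain ⟨s, i, j, hij, hsurj, hker⟩ := exists_glue k x y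
  refine ⟨s, i, j, fun n hn => ?_⟩
  rw [← idealDepth_fibre (pow_ne_zero n hI0) (pow_ne_zero n hJ0)
    ((Ideal.pow_le_self (by omega)).trans hI) ((Ideal.pow_le_self (by omega)).trans hJ) x y]
  set φ := Algebra.TensorProduct.productMap
    (rename i : MvPolynomial σ k →ₐ[k] MvPolynomial (Fin s) k) (rename j) with hφ
  have hL : ∀ K : Ideal (MvPolynomial σ k), (extL k (MvPolynomial τ k) K).map φ =
      K.map (rename i : MvPolynomial σ k →ₐ[k] MvPolynomial (Fin s) k) := fun K => by
    rw [extL, Ideal.map_mapₐ, hφ, Algebra.TensorProduct.productMap_left]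
  have hR : ∀ K : Ideal (MvPolynomial τ k), (extR k (MvPolynomial σ k) K).map φ =
      K.map (rename j : MvPolynomial τ k →ₐ[k] MvPolynomial (Fin s) k) := fun K => by
    rw [extR, Ideal.map_mapₐ, hφ, Algebra.TensorProduct.productMap_right]
  have hm : (extL k (MvPolynomial τ k) (maxHomIdeal k σ) ⊔
      extR k (MvPolynomial σ k) (maxHomIdeal k τ)).map φ = maxHomIdeal k (Fin s) := by
    rw [Ideal.map_sup, hL, hR, maxHomIdeal, maxHomIdeal, maxHomIdeal, Ideal.map_span,
      Ideal.map_span, ← Ideal.span_union]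
    congr 1
    ext p
    constructor
    · rintro (⟨_, ⟨a, rfl⟩, rfl⟩ | ⟨_, ⟨a, rfl⟩, rfl⟩)
      · exact ⟨i a, by simp⟩
      · exact ⟨j a, by simp⟩
    · rintro ⟨u, rfl⟩
      rcases hij u with ⟨a, rfl⟩ | ⟨a, rfl⟩
      · exact Or.inl ⟨X a, ⟨a, rfl⟩, by simp⟩
      · exact Or.inr ⟨X a, ⟨a, rfl⟩, by simp⟩
  have hQ : (I.map (rename i : MvPolynomial σ k →ₐ[k] MvPolynomial (Fin s) k) *
      J.map (rename j : MvPolynomial τ k →ₐ[k] MvPolynomial (Fin s) k)) ^ n =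
      (extL k (MvPolynomial τ k) (I ^ n) * extR k (MvPolynomial σ k) (J ^ n)).map φ := by
    rw [Ideal.map_mul, hL, hR, Ideal.map_pow, Ideal.map_pow, mul_pow]
  have hcomap : Ideal.comap φ ((I.map (rename i : MvPolynomial σ k →ₐ[k] MvPolynomial (Fin s) k) *
      J.map (rename j : MvPolynomial τ k →ₐ[k] MvPolynomial (Fin s) k)) ^ n) =
      extL k (MvPolynomial τ k) (I ^ n) * extR k (MvPolynomial σ k) (J ^ n) ⊔
        Ideal.span {X x ⊗ₜ[k] 1 - 1 ⊗ₜ[k] X y} := by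
    rw [hQ, Ideal.comap_map_of_surjective φ hsurj, ← hker, RingHom.ker_eq_comap_bot]
  have := idealDepth_comap φ.toRingHom hsurj (extL k (MvPolynomial τ k) (maxHomIdeal k σ) ⊔
      extR k (MvPolynomial σ k) (maxHomIdeal k τ))
      ((I.map (rename i : MvPolynomial σ k →ₐ[k] MvPolynomial (Fin s) k) *
      J.map (rename j : MvPolynomial τ k →ₐ[k] MvPolynomial (Fin s) k)) ^ n)
  rw [← hcomap, ← hm]
  exact this.symm

end glue

/-- **Proposition 6.1** (additivity of depth functions): for nonzero proper homogeneous ideals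
`I ⊆ A = k[X]` and `J ⊆ B = k[Y]` there exist a polynomial ring `S` over `k` and a homogeneous
ideal `Q ⊆ S` with `depth S/Qⁿ = depth A/Iⁿ + depth B/Jⁿ` for all `n ≥ 1`; moreover, if `I`
and `J` are monomial ideals then `Q` can be chosen to be a monomial ideal. -/
theorem exists_depth_function_additive
    {k : Type} [Field k] {σ τ : Type} [Fintype σ] [Fintype τ]
    (I : Ideal (MvPolynomial σ k)) (J : Ideal (MvPolynomial τ k))
    (hIbot : I ≠ ⊥) (hItop : I ≠ ⊤) (hIhom : IsHomogeneousIdeal I)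
    (hJbot : J ≠ ⊥) (hJtop : J ≠ ⊤) (hJhom : IsHomogeneousIdeal J) :
    (∃ (s : ℕ) (Q : Ideal (MvPolynomial (Fin s) k)), IsHomogeneousIdeal Q ∧
      ∀ n : ℕ, 1 ≤ n →
        idealDepth (maxHomIdeal k (Fin s)) (MvPolynomial (Fin s) k ⧸ Q ^ n) =
          idealDepth (maxHomIdeal k σ) (MvPolynomial σ k ⧸ I ^ n) +
          idealDepth (maxHomIdeal k τ) (MvPolynomial τ k ⧸ J ^ n)) ∧
    (IsMonomialIdeal I → IsMonomialIdeal J →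
      ∃ (s : ℕ) (Q : Ideal (MvPolynomial (Fin s) k)), IsMonomialIdeal Q ∧
        ∀ n : ℕ, 1 ≤ n →
          idealDepth (maxHomIdeal k (Fin s)) (MvPolynomial (Fin s) k ⧸ Q ^ n) =
            idealDepth (maxHomIdeal k σ) (MvPolynomial σ k ⧸ I ^ n) +
            idealDepth (maxHomIdeal k τ) (MvPolynomial τ k ⧸ J ^ n)) := by
  have hIm := le_maxHomIdeal hItop hIhom
  have hJm := le_maxHomIdeal hJtop hJhom
  obtain ⟨s, i, j, h⟩ := exists_idealDepth_add I J hIbot hJbot hIm hJm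
  exact ⟨⟨s, _, (hIhom.map_rename i).mul (hJhom.map_rename j), h⟩,
    fun hI hJ => ⟨s, _, (hI.map_rename i).mul (hJ.map_rename j), h⟩⟩
end

section
/- Let A and B be polynomial rings over a field k in disjoint sets of variables, R = A ⊗_k B, and let I ⊆ A and J ⊆ B be nonzero proper homogeneous ideals. Let x be a variable of A and y a variable of B. Then the set of associated primes of R/(IJ + (x−y)) equals { pR + (x−y) : p ∈ Ass_A(A/I) } ∪ { qR + (x−y) : q ∈ Ass_B(B/J) } ∪ ⋃ Min_R(R/(pR + qR)), where the last union is over p ∈ Ass_A(A/I) with x ∈ p and q ∈ Ass_B(B/J) with y ∈ q. -/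
/-!
Write `ℓ = x - y`, and `I`, `J`, `p`, `q` also for the extensions to `R`. Three facts about the
tensor product `R = A ⊗ B` are used. Flatness of `R` over each factor gives `I ∩ J = I J`
(`IsTensorAlg.inf_eq_mul`). Flat base change together with the absence of embedded primes in the
tensor product of two domains over a field gives `Ass(R/(I + J)) = ⋃ Min(R/(p + q))`
(`IsTensorAlg.isAss_sup_iff`). Finally `R/(ℓ)` is a polynomial ring over `A`, so `Ass(R/(I + ℓ))`
consists of the primes `p + (ℓ)` (`IsTensorAlg.isAss_sup_span_iff`), and likewise for `J`.

Let `L = I J + (ℓ)` and `L' = (I + (ℓ)) ∩ (J + (ℓ))`. An associated prime of `R/L` is associated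
to `R/L'` or to `L'/L`; in the first case it equals some `p + (ℓ)` or `q + (ℓ)`. As `ℓ` is regular
modulo `I` and modulo `J` (`IsTensorAlg.mem_of_mul_mem`), writing `w ∈ L'` as `i + ℓ c = j + ℓ d`
and sending it to `d - c` embeds `L'/L` in `R/(I + J)`, with image the annihilator of `ℓ`
(`mul_mem_mul_sup_span_iff`). Hence the associated primes of `L'/L` are those of `R/(I + J)` that
contain `ℓ`. Homogeneity of `I` shows that such a prime contains both `x` and `y`
(`IsTensorAlg.mem_of_sub_mem`), and this gives the third family.
Conversely `p + (ℓ)` is associated to `R/L` by an explicit witness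
(`IsTensorAlg.isAss_mul_sup_span`), and the situation is symmetric in the two factors.
-/

open MvPolynomial TensorProduct

/-! ### Associated primes under flat base change -/

/-- `IsAss L P`: the prime ideal `P` is an associated prime of `R ⧸ L`, written inside `R` as
`P = (L : w)` for some `w : R`, so that no quotient modules are needed. -/
def IsAss {R : Type*} [CommRing R] (L P : Ideal R) : Prop :=
  P.IsPrime ∧ ∃ w, ∀ s, s ∈ P ↔ s * w ∈ L

theorem mem_associatedPrimes_iff_isAss {R : Type*} [CommRing R] [IsNoetherianRing R]
    {L P : Ideal R} : P ∈ associatedPrimes R (R ⧸ L) ↔ IsAss L P := by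
  rw [AssociatedPrimes.mem_iff, isAssociatedPrime_iff, IsAss]
  refine and_congr_right fun _ => ⟨?_, ?_⟩
  · rintro ⟨x, hx⟩
    obtain ⟨w, rfl⟩ := Ideal.Quotient.mk_surjective x
    refine ⟨w, fun s => ?_⟩
    rw [hx, Submodule.mem_colon_singleton, Submodule.mem_bot, Algebra.smul_def,
      Ideal.Quotient.algebraMap_eq, ← map_mul, Ideal.Quotient.eq_zero_iff_mem]
  · rintro ⟨w, hw⟩
    refine ⟨Ideal.Quotient.mk L w, ?_⟩
    ext s
    rw [hw, Submodule.mem_colon_singleton, Submodule.mem_bot, Algebra.smul_def,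
      Ideal.Quotient.algebraMap_eq, ← map_mul, Ideal.Quotient.eq_zero_iff_mem]

theorem mem_colon_el {A : Type*} [CommRing A] {I : Ideal A} {u a : A} :
    a ∈ I.colon {u} ↔ a * u ∈ I := by
  rw [Submodule.mem_colon_singleton, smul_eq_mul]

/-- When the ideal `L` is enlarged to `L'`, an associated prime of `L` either stays associated or
has a witness in `L'`; this is `Ass(R/L) ⊆ Ass(L'/L) ∪ Ass(R/L')`. -/
theorem IsAss.dichotomy {R : Type*} [CommRing R] {L P : Ideal R} (h : IsAss L P) (L' : Ideal R)
    (hL : L ≤ L') : IsAss L' P ∨ ∃ w ∈ L', ∀ s, s ∈ P ↔ s * w ∈ L := by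
  obtain ⟨hP, w, hw⟩ := h
  by_cases hs : ∃ s, s ∉ P ∧ s * w ∈ L'
  · obtain ⟨s, hsP, hsw⟩ := hs
    refine Or.inr ⟨s * w, hsw, fun t => ?_⟩
    rw [← mul_assoc, ← hw]
    exact ⟨fun ht => P.mul_mem_right _ ht, fun ht => (hP.mem_or_mem ht).resolve_right hsP⟩
  · refine Or.inl ⟨hP, w, fun s => ⟨fun h => hL ((hw s).1 h), fun h => ?_⟩⟩
    by_contra h'
    exact hs ⟨s, h', h⟩

/-- `ColonFlat f K`: extension of ideals along `f` followed by `R → R ⧸ K` commutes with colons by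
elements, `(I(R/K) : u) = (I : u)(R/K)`. It holds when `R ⧸ K` is flat over `A`, and it is the only
consequence of flatness needed to relate associated primes upstairs and downstairs. -/
def ColonFlat {A R : Type*} [CommRing A] [CommRing R] (f : A →+* R) (K : Ideal R) : Prop :=
  ∀ (I : Ideal A) (u : A) (w : R), f u * w ∈ I.map f ⊔ K → w ∈ (I.colon {u}).map f ⊔ K

namespace ColonFlat
variable {A R : Type*} [CommRing A] [CommRing R] {f : A →+* R} {K : Ideal R}

theorem mem_iff (h : ColonFlat f K) {I : Ideal A} {u : A} {w : R} :
    f u * w ∈ I.map f ⊔ K ↔ w ∈ (I.colon {u}).map f ⊔ K := by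
  refine ⟨h I u w, fun hw => ?_⟩
  obtain ⟨x, hx, y, hy, rfl⟩ := Submodule.mem_sup.1 hw
  rw [mul_add]
  refine Submodule.add_mem_sup ?_ (K.mul_mem_left _ hy)
  have : (I.colon {u}).map f ≤ (I.map f).colon {f u} := by
    rw [Ideal.map_le_iff_le_comap]
    intro a ha
    rw [Ideal.mem_comap, mem_colon_el, ← map_mul]
    exact Ideal.mem_map_of_mem f (mem_colon_el.1 ha)
  have h2 := mem_colon_el.1 (this hx)
  rwa [mul_comm] at h2

/-- Associated primes of the extension of an associated prime `p` of `I` are associated to the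
extension of `I`, because `A ⧸ p` embeds in `A ⧸ I`. -/
theorem isAss_of_isAss (h : ColonFlat f K) {I p : Ideal A} (hp : IsAss I p) {P : Ideal R}
    (hP : IsAss (p.map f ⊔ K) P) : IsAss (I.map f ⊔ K) P := by
  obtain ⟨-, u, hu⟩ := hp
  obtain ⟨hP, w, hw⟩ := hP
  refine ⟨hP, f u * w, fun s => ?_⟩
  have : p = I.colon {u} := by ext; rw [hu, mem_colon_el]
  rw [hw, this, mul_left_comm, h.mem_iff]

/-- If `P` is associated to `I(R/K)` then it is already associated to `p(R/K)`, where `p` is its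
contraction to `A`. Noetherian induction on `I`: when `a * b ∈ I` with `a, b ∉ I`, the prime `P` is
associated to the extension of `I + (a)` or of `(I : a)`, both of which are larger than `I`. -/
theorem isAss_comap [IsNoetherianRing A] (h : ColonFlat f K) (I : Ideal A) {P : Ideal R}
    (hP : IsAss (I.map f ⊔ K) P) : IsAss ((P.comap f).map f ⊔ K) P := by
  revert hP
  refine IsNoetherian.induction (R := A) (M := A) (P := fun I : Ideal A =>
    IsAss (I.map f ⊔ K) P → IsAss ((P.comap f).map f ⊔ K) P) (fun (I : Ideal A) ih hP => ?_) I
  obtain ⟨hPp, w, hw⟩ := id hP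
  have hwI : w ∉ I.map f ⊔ K := by
    intro hwI
    have h1 : (1 : R) ∈ P := (hw 1).2 ((one_mul w).symm ▸ hwI)
    exact hPp.ne_top ((Ideal.eq_top_iff_one _).2 h1)
  by_cases hI : I.IsPrime
  · have : P.comap f = I := by
      ext a
      rw [Ideal.mem_comap, hw]
      refine ⟨fun ha => ?_, fun ha => Ideal.mul_mem_right _ _
        (Ideal.mem_sup_left (Ideal.mem_map_of_mem f ha))⟩
      by_contra haI
      have := h _ _ _ ha
      have hc : I.colon {a} = I := by
        ext b
        rw [mem_colon_el]
        exact ⟨fun hb => (hI.mem_or_mem hb).resolve_right haI, fun hb => I.mul_mem_right _ hb⟩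
      rw [hc] at this
      exact hwI this
    rwa [this]
  · have hIt : I ≠ ⊤ := by
      rintro rfl
      rw [Ideal.map_top, top_sup_eq] at hwI
      exact hwI trivial
    rw [Ideal.isPrime_iff] at hI
    push Not at hI
    obtain ⟨a, b, hab, ha, hb⟩ := hI hIt
    rcases hP.dichotomy ((I ⊔ Ideal.span {a}).map f ⊔ K)
      (sup_le_sup_right (Ideal.map_mono le_sup_left) _) with h1 | ⟨v, hv, hPv⟩
    · refine ih _ (lt_of_le_of_ne le_sup_left fun he => ha ?_) h1
      rw [he]
      exact Ideal.mem_sup_right (Ideal.mem_span_singleton_self a)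
    · refine ih (I.colon {a}) (lt_of_le_of_ne (fun c hc => mem_colon_el.2 (I.mul_mem_right _ hc))
        fun he => hb ?_) ⟨hPp, ?_⟩
      · rw [he, mem_colon_el, mul_comm]
        exact hab
      · rw [Ideal.map_sup, Ideal.map_span, Set.image_singleton, sup_right_comm] at hv
        obtain ⟨y, hy, z, hz, rfl⟩ := Submodule.mem_sup.1 hv
        obtain ⟨r, rfl⟩ := Ideal.mem_span_singleton.1 hz
        refine ⟨r, fun s => ?_⟩
        rw [hPv, ← h.mem_iff, mul_add, Ideal.add_mem_iff_right _ (Ideal.mul_mem_left _ _ hy),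
          mul_left_comm]

/-- The contraction of an associated prime of `I(R/K)` is an associated prime of `I`. Otherwise
prime avoidance gives `a` in the contraction `p` lying in no associated prime of `I` contained in
`p`; then `(0 : a)` in `A ⧸ I` is killed by some `s ∉ p`, so `(I : a) ≤ (I : s)`, and `a ∈ p`
forces `s ∈ p`. -/
theorem comap_isAss [IsNoetherianRing A] (h : ColonFlat f K) (I : Ideal A) {P : Ideal R}
    (hP : IsAss (I.map f ⊔ K) P) : IsAss I (P.comap f) := by
  obtain ⟨hPp, w, hw⟩ := hP
  by_contra hn
  have hp0 : (P.comap f).IsPrime := hPp.comap f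
  have hfin := associatedPrimes.finite A (A ⧸ I)
  -- prime avoidance
  have hav : ¬ ((P.comap f : Ideal A) : Set A) ⊆
      ⋃ Q ∈ {Q ∈ associatedPrimes A (A ⧸ I) | Q ≤ P.comap f}, (Q : Set A) := by
    intro hsub
    rw [Ideal.subset_union_prime_finite (hfin.subset (Set.sep_subset _ _)) (f := fun Q => Q) ⊥ ⊥
      (fun Q hQ _ _ => hQ.1.1)] at hsub
    obtain ⟨Q, ⟨hQ, hQ1⟩, hQ2⟩ := hsub
    rw [le_antisymm hQ1 hQ2, mem_associatedPrimes_iff_isAss] at hQ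
    exact hn hQ
  rw [Set.not_subset] at hav
  obtain ⟨a, ha, haQ⟩ := hav
  -- the associated primes of `N = (0 : a)` contain `a`, so none of them is inside the contraction
  let N := Submodule.torsionBy A (A ⧸ I) a
  have haN : a ∈ Module.annihilator A N := by
    rw [Module.mem_annihilator]
    rintro ⟨n, hn⟩
    exact Subtype.ext ((Submodule.mem_torsionBy_iff a n).1 hn)
  have hs : ∃ s ∈ Module.annihilator A N, s ∉ P.comap f := by
    by_contra! hs
    obtain ⟨Q, hQ, hQP⟩ := Ideal.exists_minimalPrimes_le (J := P.comap f)
      (I := Module.annihilator A N) hs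
    have hQN := Module.associatedPrimes.minimalPrimes_annihilator_subset_associatedPrimes A N hQ
    have hQI := associatedPrimes.subset_of_injective (f := N.subtype) N.subtype_injective hQN
    exact haQ (Set.mem_biUnion (x := Q) ⟨hQI, hQP⟩ (hQ.1.2 haN))
  obtain ⟨s, hsN, hsP⟩ := hs
  have h1 := h _ _ _ ((hw _).1 ha)
  apply hsP
  rw [Ideal.mem_comap, hw, h.mem_iff]
  suffices hle : I.colon {a} ≤ I.colon {s} by
    have h2 : (I.colon {a}).map f ⊔ K ≤ (I.colon {s}).map f ⊔ K :=
      sup_le_sup_right (Ideal.map_mono hle) K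
    exact h2 h1
  intro c hc
  rw [mem_colon_el] at hc ⊢
  have hcN : Ideal.Quotient.mk I c ∈ N := by
    rw [Submodule.mem_torsionBy_iff, Algebra.smul_def, Ideal.Quotient.algebraMap_eq, ← map_mul,
      Ideal.Quotient.eq_zero_iff_mem, mul_comm]
    exact hc
  have := congrArg Subtype.val (Module.mem_annihilator.1 hsN ⟨_, hcN⟩)
  rwa [Submodule.coe_smul, Submodule.coe_zero, Algebra.smul_def, Ideal.Quotient.algebraMap_eq,
    ← map_mul, Ideal.Quotient.eq_zero_iff_mem, mul_comm] at this

/-- The flat base change formula `Ass(I(R/K)) = ⋃ Ass(p(R/K))` over `p ∈ Ass(A/I)`. -/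
theorem isAss_iff [IsNoetherianRing A] (h : ColonFlat f K) {I : Ideal A} {P : Ideal R} :
    IsAss (I.map f ⊔ K) P ↔ ∃ p, IsAss I p ∧ IsAss (p.map f ⊔ K) P :=
  ⟨fun hP => ⟨_, h.comap_isAss I hP, h.isAss_comap I hP⟩, fun ⟨_, hp, hP⟩ => h.isAss_of_isAss hp hP⟩

end ColonFlat

theorem exists_sum_of_mem_map {A R : Type*} [CommRing A] [CommRing R] {f : A →+* R} {I : Ideal A}
    {x : R} (hx : x ∈ I.map f) : ∃ (n : ℕ) (c : Fin n → R) (i : Fin n → A),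
      (∀ j, i j ∈ I) ∧ x = ∑ j, f (i j) * c j := by
  have hx' : x ∈ Submodule.span R (⇑f '' (I : Set A)) := hx
  obtain ⟨n, c, g, hg⟩ := Submodule.mem_span_set'.1 hx'
  choose i hi hig using fun j => (g j).2
  refine ⟨n, c, i, hi, ?_⟩
  rw [← hg]
  exact Finset.sum_congr rfl fun j _ => by rw [hig, smul_eq_mul, mul_comm]

section Flat
variable {A R E : Type*} [CommRing A] [CommRing R] [CommRing E] [Algebra A E] [Module.Flat A E]
  {f : A →+* R} {K : Ideal R} {π : R →+* E}

/-- The equational criterion for flatness applied to a relation `u * w ∈ I R + K`. -/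
theorem colonFlat_of_flat (hf : ∀ a, π (f a) = algebraMap A E a) (hπ : Function.Surjective π)
    (hK : RingHom.ker π = K) : ColonFlat f K := by
  subst hK
  intro I u w hw
  obtain ⟨x, hx, y, hy, hxy⟩ := Submodule.mem_sup.1 hw
  obtain ⟨n, c, i, hi, rfl⟩ := exists_sum_of_mem_map hx
  rw [RingHom.mem_ker] at hy
  have hrel : ∑ o : Option (Fin n), (o.elim u fun j => - i j) •
      (o.elim (π w) fun j => π (c j)) = 0 := by
    rw [Fintype.sum_option]
    simp only [Option.elim, Algebra.smul_def, ← hf, ← map_mul, ← map_sum, ← map_add]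
    rw [← hxy, map_add, map_add, hy, add_zero, ← map_add]
    simp
  obtain ⟨m, a, z, ha, hz⟩ :=
    Module.Flat.isTrivialRelation_of_sum_smul_eq_zero (R := A) (M := E) hrel
  choose z' hz' using fun j => hπ (z j)
  have h0 := ha none
  have h1 : w - ∑ j, f (a none j) * z' j ∈ RingHom.ker π := by
    rw [RingHom.mem_ker, map_sub, sub_eq_zero]
    simpa [Algebra.smul_def, ← hf, hz'] using h0
  rw [← sub_add_cancel w (∑ j, f (a none j) * z' j), add_comm]
  refine Submodule.add_mem_sup (Ideal.sum_mem _ fun j _ => Ideal.mul_mem_right _ _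
    (Ideal.mem_map_of_mem _ (mem_colon_el.2 ?_))) h1
  have := hz j
  rw [Fintype.sum_option] at this
  simp only [Option.elim] at this
  rw [mul_comm, eq_neg_of_add_eq_zero_left this]
  exact I.neg_mem (I.sum_mem fun j _ => I.mul_mem_right _ (I.neg_mem (hi j)))

/-- The vanishing of `Tor₁(A/I, R/K)` in concrete form, by the equational criterion for
flatness. -/
theorem inf_le_mul_of_flat (hf : ∀ a, π (f a) = algebraMap A E a) (hπ : Function.Surjective π)
    (hK : RingHom.ker π = K) (I : Ideal A) : I.map f ⊓ K ≤ I.map f * K := by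
  subst hK
  rintro x ⟨hx, hxK⟩
  obtain ⟨n, c, i, hi, rfl⟩ := exists_sum_of_mem_map hx
  have hrel : ∑ j, i j • π (c j) = 0 := by
    simp only [Algebra.smul_def, ← hf, ← map_mul, ← map_sum]
    exact hxK
  obtain ⟨m, a, z, ha, hz⟩ :=
    Module.Flat.isTrivialRelation_of_sum_smul_eq_zero (R := A) (M := E) hrel
  choose z' hz' using fun j => hπ (z j)
  have hx' : ∑ j, f (i j) * c j = ∑ j, f (i j) * (c j - ∑ l, f (a j l) * z' l) := by
    simp only [mul_sub, Finset.sum_sub_distrib, Finset.mul_sum]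
    rw [Finset.sum_comm]
    simp only [← mul_assoc, ← Finset.sum_mul, ← map_mul, ← map_sum, hz]
    simp
  rw [hx']
  refine Ideal.sum_mem _ fun j _ => Ideal.mul_mem_mul (Ideal.mem_map_of_mem _ (hi j)) ?_
  have h2 : π (c j) = _ := ha j
  rw [RingHom.mem_ker, map_sub, sub_eq_zero, h2]
  simp [Algebra.smul_def, ← hf, hz']

end Flat

/-! ### Tensor products over a field -/

/-- `IsTensorAlg k f g`: the maps `f : A → R` and `g : B → R` exhibit `R` as the tensor product
`A ⊗[k] B`. The notion is symmetric in the two factors. -/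
def IsTensorAlg (k : Type*) {A B R : Type*} [Field k] [CommRing A] [CommRing B] [CommRing R]
    [Algebra k A] [Algebra k B] [Algebra k R] (f : A →+* R) (g : B →+* R) : Prop :=
  ∃ e : A ⊗[k] B ≃ₐ[k] R, (∀ a, e (a ⊗ₜ 1) = f a) ∧ ∀ b, e (1 ⊗ₜ b) = g b

namespace IsTensorAlg
variable {k A B R : Type*} [Field k] [CommRing A] [CommRing B] [CommRing R]
    [Algebra k A] [Algebra k B] [Algebra k R] {f : A →+* R} {g : B →+* R}

theorem symm (h : IsTensorAlg k f g) : IsTensorAlg k g f := by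
  obtain ⟨e, h1, h2⟩ := h
  exact ⟨(Algebra.TensorProduct.comm k B A).trans e, fun b => by simp [h2], fun a => by simp [h1]⟩

/-- `R ⧸ (I R + J R)` is the tensor product of `A ⧸ I` and `B ⧸ J`. -/
theorem exists_quot (h : IsTensorAlg k f g) (I : Ideal A) (J : Ideal B) :
    ∃ π : R →+* (A ⧸ I) ⊗[k] (B ⧸ J), Function.Surjective π ∧
      RingHom.ker π = I.map f ⊔ J.map g := by
  obtain ⟨e, h1, h2⟩ := h
  let ρ : A ⊗[k] B →ₐ[k] (A ⧸ I) ⊗[k] (B ⧸ J) :=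
    Algebra.TensorProduct.map (Ideal.Quotient.mkₐ k I) (Ideal.Quotient.mkₐ k J)
  have hsI := Ideal.Quotient.mkₐ_surjective k I
  have hsJ := Ideal.Quotient.mkₐ_surjective k J
  have hρ : RingHom.ker ρ = _ := Algebra.TensorProduct.map_ker _ _ hsI hsJ
  have hρs : Function.Surjective ρ := Algebra.TensorProduct.map_surjective _ _ hsI hsJ
  refine ⟨(ρ : A ⊗[k] B →+* _).comp (e.symm : R →+* A ⊗[k] B), hρs.comp e.symm.surjective, ?_⟩
  have hI : RingHom.ker (Ideal.Quotient.mkₐ k I) = I := Ideal.Quotient.mkₐ_ker k I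
  have hJ : RingHom.ker (Ideal.Quotient.mkₐ k J) = J := Ideal.Quotient.mkₐ_ker k J
  rw [hI, hJ] at hρ
  have hf : f = (e : A ⊗[k] B →+* R).comp
      ((Algebra.TensorProduct.includeLeft : A →ₐ[k] A ⊗[k] B) : A →+* A ⊗[k] B) :=
    RingHom.ext fun a => (h1 a).symm
  have hg : g = (e : A ⊗[k] B →+* R).comp
      ((Algebra.TensorProduct.includeRight : B →ₐ[k] A ⊗[k] B) : B →+* A ⊗[k] B) :=
    RingHom.ext fun a => (h2 a).symm
  rw [hf, hg, ← Ideal.map_map, ← Ideal.map_map, ← Ideal.map_sup]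
  have : Ideal.map (e : A ⊗[k] B →+* R) (RingHom.ker ρ) =
    Ideal.comap (e.symm : R →+* A ⊗[k] B) (RingHom.ker ρ) :=
    Ideal.map_comap_of_equiv (e : A ⊗[k] B ≃+* R)
  rw [hρ] at this
  refine Eq.trans ?_ this.symm
  rw [← RingHom.comap_ker]
  exact congrArg _ hρ

/-- `R ⧸ J R` is the base change of `B ⧸ J` to `A`; in particular it is flat over `A`. -/
theorem exists_quot_right (h : IsTensorAlg k f g) (J : Ideal B) :
    ∃ π : R →+* A ⊗[k] (B ⧸ J), (∀ a, π (f a) = algebraMap A _ a) ∧ Function.Surjective π ∧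
      RingHom.ker π = J.map g := by
  obtain ⟨e, h1, h2⟩ := h
  let ρ : A ⊗[k] B →ₐ[k] A ⊗[k] (B ⧸ J) :=
    Algebra.TensorProduct.map (AlgHom.id k A) (Ideal.Quotient.mkₐ k J)
  have hsJ := Ideal.Quotient.mkₐ_surjective k J
  have hρ : RingHom.ker ρ = _ := Algebra.TensorProduct.lTensor_ker _ hsJ
  have hρs : Function.Surjective ρ := LinearMap.lTensor_surjective A hsJ
  refine ⟨(ρ : A ⊗[k] B →+* _).comp (e.symm : R →+* A ⊗[k] B), fun a => ?_,
    hρs.comp e.symm.surjective, ?_⟩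
  · have : e.symm (f a) = a ⊗ₜ 1 := by rw [← h1, e.symm_apply_apply]
    change ρ (e.symm (f a)) = _
    rw [this]
    simp [ρ, Algebra.TensorProduct.algebraMap_apply]
  have hJ : RingHom.ker (Ideal.Quotient.mkₐ k J) = J := Ideal.Quotient.mkₐ_ker k J
  rw [hJ] at hρ
  have hg : g = (e : A ⊗[k] B →+* R).comp
      ((Algebra.TensorProduct.includeRight : B →ₐ[k] A ⊗[k] B) : B →+* A ⊗[k] B) :=
    RingHom.ext fun a => (h2 a).symm
  rw [hg, ← Ideal.map_map]
  have : Ideal.map (e : A ⊗[k] B →+* R) (RingHom.ker ρ) =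
    Ideal.comap (e.symm : R →+* A ⊗[k] B) (RingHom.ker ρ) :=
    Ideal.map_comap_of_equiv (e : A ⊗[k] B ≃+* R)
  rw [hρ] at this
  refine Eq.trans ?_ this.symm
  rw [← RingHom.comap_ker]
  exact congrArg _ hρ

theorem colonFlat (h : IsTensorAlg k f g) (J : Ideal B) : ColonFlat f (J.map g) := by
  obtain ⟨π, h1, h2, h3⟩ := h.exists_quot_right J
  exact colonFlat_of_flat h1 h2 h3

/-- Extensions of ideals from the two tensor factors intersect in their product. -/
theorem inf_eq_mul (h : IsTensorAlg k f g) (I : Ideal A) (J : Ideal B) :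
    I.map f ⊓ J.map g = I.map f * J.map g := by
  obtain ⟨π, h1, h2, h3⟩ := h.exists_quot_right J
  exact le_antisymm (inf_le_mul_of_flat h1 h2 h3 I) Ideal.mul_le_inf

end IsTensorAlg

/-- For a domain `A` integral over a domain `C` and a flat `C`-algebra `D` which is a domain, the
associated primes of `D ⊗[C] A` are minimal. Since `A` embeds in its fraction field, which is flat
over `C`, the nonzero elements of `D` are regular on `D ⊗[C] A`, so an associated prime `P`
contracts to `0` in `D`; incomparability in the integral extension `D → D ⊗[C] A` then excludes
smaller primes. -/
theorem eq_of_le_of_isAss_bot {C A D : Type*} [CommRing C] [CommRing A] [CommRing D]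
    [IsDomain C] [IsDomain A] [IsDomain D] [Algebra C A] [Algebra C D] [Algebra.IsIntegral C A]
    [FaithfulSMul C A] [Module.Flat C D] {P P' : Ideal (D ⊗[C] A)} (hP : IsAss ⊥ P)
    (hP' : P'.IsPrime) (hle : P' ≤ P) : P' = P := by
  obtain ⟨hPp, w, hw⟩ := hP
  have hbot : P.comap (algebraMap D (D ⊗[C] A)) = ⊥ := by
    rw [eq_bot_iff]
    intro d hd
    rw [Ideal.mem_comap, hw, Ideal.mem_bot] at hd
    by_contra hd0
    -- `Frac A` is a vector space over `Frac C`, hence flat over `C`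
    let F := FractionRing C
    let K := FractionRing A
    have hinj : Function.Injective (algebraMap C K) := by
      rw [IsScalarTower.algebraMap_eq C A K]
      exact (IsFractionRing.injective A K).comp (FaithfulSMul.algebraMap_injective C A)
    have : FaithfulSMul C K := (faithfulSMul_iff_algebraMap_injective C K).2 hinj
    let _ : Algebra F K := FractionRing.liftAlgebra C K
    have : IsScalarTower C F K := FractionRing.isScalarTower_liftAlgebra C K
    have : Module.Flat C F := IsLocalization.flat F (nonZeroDivisors C)
    have : Module.Flat C K := Module.Flat.trans C F K
    let φ : D ⊗[C] A →ₗ[C] D ⊗[C] K := LinearMap.lTensor D (IsScalarTower.toAlgHom C A K).toLinearMap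
    have hφ : Function.Injective φ := Module.Flat.lTensor_preserves_injective_linearMap _
      (IsFractionRing.injective A K)
    have hφd : ∀ t, φ (d • t) = d • φ t := by
      intro t
      induction t with
      | zero => simp
      | add x y hx hy => simp only [smul_add, map_add, hx, hy]
      | tmul x y => simp [φ, TensorProduct.smul_tmul']
    rw [← Algebra.smul_def] at hd
    have h1 : d • φ w = 0 := by rw [← hφd, hd, map_zero]
    have hreg : IsSMulRegular (D ⊗[C] K) d :=
      Module.Flat.isSMulRegular_of_nonZeroDivisors (R := D) (M := D ⊗[C] K)
        (mem_nonZeroDivisors_of_ne_zero hd0)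
    have h2 : φ w = 0 := hreg (h1.trans (smul_zero d).symm)
    have h3 : w = 0 := hφ (h2.trans (map_zero φ).symm)
    refine hPp.ne_top ((Ideal.eq_top_iff_one _).2 ((hw 1).2 ?_))
    rw [h3, mul_zero]
    exact Ideal.zero_mem _
  by_contra hne
  obtain ⟨x, hxP, hxP'⟩ := SetLike.exists_of_lt (lt_of_le_of_ne hle hne)
  have := Ideal.comap_lt_comap_of_integral_mem_sdiff (R := D) hle ⟨hxP, hxP'⟩
    (Algebra.IsIntegral.isIntegral x)
  rw [hbot] at this
  exact not_lt_bot this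

theorem IsAss.of_surjective {R T : Type*} [CommRing R] [CommRing T] {π : R →+* T}
    (hπ : Function.Surjective π) {P : Ideal R} (h : IsAss (RingHom.ker π) P) :
    IsAss ⊥ (P.map π) ∧ (P.map π).comap π = P := by
  obtain ⟨hP, w, hw⟩ := h
  have hle : RingHom.ker π ≤ P := fun s hs => (hw s).2 (Ideal.mul_mem_right _ _ hs)
  have hc : (P.map π).comap π = P := by
    rw [Ideal.comap_map_of_surjective' π hπ, sup_eq_left]
    exact hle
  refine ⟨⟨Ideal.map_isPrime_of_surjective hπ hle, π w, fun t => ?_⟩, hc⟩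
  obtain ⟨s, rfl⟩ := hπ t
  rw [← Ideal.mem_comap, hc, hw, RingHom.mem_ker, map_mul, Ideal.mem_bot]

/-- If the associated primes of the quotient `T'` of `T` are minimal primes of `T'`, then an
associated prime of the kernel contains no other prime above the kernel. -/
theorem eq_of_le_of_isAss_of_surjective {T T' : Type*} [CommRing T] [CommRing T'] {π : T →+* T'}
    (hπ : Function.Surjective π)
    (h : ∀ P P' : Ideal T', IsAss ⊥ P → P'.IsPrime → P' ≤ P → P' = P)
    {P P' : Ideal T} (hP : IsAss (RingHom.ker π) P) (hP' : P'.IsPrime) (hker : RingHom.ker π ≤ P')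
    (hle : P' ≤ P) : P' = P := by
  obtain ⟨h1, h2⟩ := hP.of_surjective hπ
  have h3 : (P'.map π).IsPrime := Ideal.map_isPrime_of_surjective hπ hker
  have h4 := h _ _ h1 h3 (Ideal.map_mono hle)
  rw [← h2, ← h4, Ideal.comap_map_of_surjective' π hπ, sup_eq_left.2 hker]

theorem eq_of_le_of_isAss_bot_baseChange {k A B : Type*} (C : Type*) [Field k] [CommRing A]
    [CommRing B] [CommRing C] [IsDomain A] [IsDomain C] [Algebra k A] [Algebra k B] [Algebra k C]
    [Algebra C A] [IsScalarTower k C A] [Algebra.IsIntegral C A] [FaithfulSMul C A]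
    [IsDomain (C ⊗[k] B)]
    {P P' : Ideal (A ⊗[k] B)} (hP : IsAss ⊥ P) (hP' : P'.IsPrime) (hle : P' ≤ P) : P' = P := by
  let e : A ⊗[k] B ≃ₐ[C] (C ⊗[k] B) ⊗[C] A :=
    (Algebra.TensorProduct.cancelBaseChange k C C A B).symm.trans
      (Algebra.TensorProduct.comm C A (C ⊗[k] B))
  have hker : RingHom.ker (e : A ⊗[k] B →+* (C ⊗[k] B) ⊗[C] A) = ⊥ :=
    (RingHom.injective_iff_ker_eq_bot _).1 e.injective
  exact eq_of_le_of_isAss_of_surjective (π := (e : A ⊗[k] B →+* (C ⊗[k] B) ⊗[C] A)) e.surjective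
    (fun P P' hP hP' hle => eq_of_le_of_isAss_bot hP hP' hle) (hker.symm ▸ hP) hP'
    (hker.le.trans bot_le) hle

/-- The tensor product over a field of two domains, one of them finitely generated, has no embedded
primes: Noether normalization reduces this to the case of an integral extension. -/
theorem eq_of_le_of_isAss_bot_tensor {k A B : Type*} [Field k] [CommRing A] [CommRing B]
    [IsDomain A] [IsDomain B] [Algebra k A] [Algebra k B] [Algebra.FiniteType k A]
    {P P' : Ideal (A ⊗[k] B)} (hP : IsAss ⊥ P)
    (hP' : P'.IsPrime) (hle : P' ≤ P) : P' = P := by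
  obtain ⟨s, g, hg, hgi⟩ := exists_integral_inj_algHom_of_fg k A
  let C := MvPolynomial (Fin s) k
  let _ : Algebra C A := g.toRingHom.toAlgebra
  have : IsScalarTower k C A := IsScalarTower.of_algebraMap_eq fun r => (g.commutes r).symm
  have : Algebra.IsIntegral C A := ⟨hgi⟩
  have : FaithfulSMul C A := (faithfulSMul_iff_algebraMap_injective C A).2 hg
  have : IsDomain (C ⊗[k] B) :=
    ((Algebra.TensorProduct.comm k C B).toRingEquiv.trans
      (MvPolynomial.algebraTensorAlgEquiv k B).toRingEquiv).isDomain_iff.mpr inferInstance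
  exact eq_of_le_of_isAss_bot_baseChange C hP hP' hle

namespace IsTensorAlg
variable {k A B R : Type*} [Field k] [CommRing A] [CommRing B] [CommRing R]
    [Algebra k A] [Algebra k B] [Algebra k R] {f : A →+* R} {g : B →+* R}

/-- For primes `p` and `q` the quotient `R ⧸ (p R + q R)` has no embedded primes. -/
theorem mem_minimalPrimes (h : IsTensorAlg k f g) [Algebra.FiniteType k A] {p : Ideal A}
    {q : Ideal B} (hp : p.IsPrime) (hq : q.IsPrime) {P : Ideal R}
    (hP : IsAss (p.map f ⊔ q.map g) P) : P ∈ (p.map f ⊔ q.map g).minimalPrimes := by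
  obtain ⟨π, hπ, hker⟩ := h.exists_quot p q
  rw [← hker] at hP ⊢
  refine ⟨⟨hP.1, ?_⟩, fun P' hP' hle => ?_⟩
  · rw [← (hP.of_surjective hπ).2]
    exact Ideal.comap_mono bot_le
  · exact (eq_of_le_of_isAss_of_surjective hπ
      (fun _ _ h1 h2 h3 => eq_of_le_of_isAss_bot_tensor h1 h2 h3) hP hP'.1 hP'.2 hle).ge

theorem isAss_iff_mem_minimalPrimes (h : IsTensorAlg k f g) [Algebra.FiniteType k A]
    [IsNoetherianRing R] {p : Ideal A}
    {q : Ideal B} (hp : p.IsPrime) (hq : q.IsPrime) {P : Ideal R} :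
    IsAss (p.map f ⊔ q.map g) P ↔ P ∈ (p.map f ⊔ q.map g).minimalPrimes := by
  refine ⟨h.mem_minimalPrimes hp hq, fun hP => ?_⟩
  rw [← mem_associatedPrimes_iff_isAss]
  apply Module.associatedPrimes.minimalPrimes_annihilator_subset_associatedPrimes
  rwa [Ideal.annihilator_quotient]

/-- `Ass(R/(I R + J R))` is the union of the `Min(R/(p R + q R))` for `p ∈ Ass(A/I)` and
`q ∈ Ass(B/J)`: base change along each of the two factors, and the absence of embedded primes of
`R/(p R + q R)`. -/
theorem isAss_sup_iff (h : IsTensorAlg k f g) [Algebra.FiniteType k A]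
    [IsNoetherianRing A] [IsNoetherianRing B] [IsNoetherianRing R] {I : Ideal A}
    {J : Ideal B} {P : Ideal R} : IsAss (I.map f ⊔ J.map g) P ↔
      ∃ p q, IsAss I p ∧ IsAss J q ∧ P ∈ (p.map f ⊔ q.map g).minimalPrimes := by
  rw [(h.colonFlat J).isAss_iff]
  constructor
  · rintro ⟨p, hp, hP⟩
    rw [sup_comm, (h.symm.colonFlat p).isAss_iff] at hP
    obtain ⟨q, hq, hP⟩ := hP
    rw [sup_comm, h.isAss_iff_mem_minimalPrimes hp.1 hq.1] at hP
    exact ⟨p, q, hp, hq, hP⟩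
  · rintro ⟨p, q, hp, hq, hP⟩
    refine ⟨p, hp, ?_⟩
    rw [sup_comm, (h.symm.colonFlat p).isAss_iff]
    refine ⟨q, hq, ?_⟩
    rwa [sup_comm, h.isAss_iff_mem_minimalPrimes hp.1 hq.1]

/-- `A ⧸ p` is a domain over which the quotient of `R` by `p R + q R` is flat, so an associated
prime of this quotient contracts to `p`. -/
theorem comap_eq (h : IsTensorAlg k f g) {p : Ideal A} (hp : p.IsPrime) {q : Ideal B} {P : Ideal R}
    (hP : IsAss (p.map f ⊔ q.map g) P) : P.comap f = p := by
  obtain ⟨hPp, w, hw⟩ := hP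
  ext a
  rw [Ideal.mem_comap, hw]
  refine ⟨fun ha => ?_, fun ha => Ideal.mul_mem_right _ _
    (Ideal.mem_sup_left (Ideal.mem_map_of_mem f ha))⟩
  by_contra hap
  have h1 := h.colonFlat q _ _ _ ha
  have hc : p.colon {a} = p := by
    ext b
    rw [mem_colon_el]
    exact ⟨fun hb => (hp.mem_or_mem hb).resolve_right hap, fun hb => p.mul_mem_right _ hb⟩
  rw [hc] at h1
  exact hPp.ne_top ((Ideal.eq_top_iff_one _).2 ((hw 1).2 ((one_mul w).symm ▸ h1)))

end IsTensorAlg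

/-- Primes of `A` extend to primes of a polynomial ring over `A`. -/
theorem IsTensorAlg.map_isPrime {k A R τ : Type*} [Field k] [CommRing A] [CommRing R]
    [Algebra k A] [Algebra k R] {f : A →+* R} {g : MvPolynomial τ k →+* R}
    (h : IsTensorAlg k f g) {p : Ideal A} (hp : p.IsPrime) : (p.map f).IsPrime := by
  obtain ⟨π, hπ, hker⟩ := h.exists_quot p ⊥
  rw [Ideal.map_bot, sup_bot_eq] at hker
  have : IsDomain ((A ⧸ p) ⊗[k] (MvPolynomial τ k ⧸ (⊥ : Ideal (MvPolynomial τ k)))) :=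
    ((Algebra.TensorProduct.congr (AlgEquiv.refl : (A ⧸ p) ≃ₐ[k] _)
      (AlgEquiv.quotientBot k (MvPolynomial τ k))).toRingEquiv.trans
      (MvPolynomial.algebraTensorAlgEquiv k (A ⧸ p)).toRingEquiv).isDomain_iff.mpr inferInstance
  rw [← hker]
  exact RingHom.ker_isPrime π

/-! ### Dividing by a linear form -/

theorem IsAss.eq_of_isPrime {R : Type*} [CommRing R] {Q P : Ideal R} (hQ : Q.IsPrime)
    (h : IsAss Q P) : P = Q := by
  obtain ⟨hP, w, hw⟩ := h
  have hwQ : w ∉ Q := fun hwQ =>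
    hP.ne_top ((Ideal.eq_top_iff_one _).2 ((hw 1).2 (Q.mul_mem_left _ hwQ)))
  ext s
  rw [hw]
  exact ⟨fun hs => (hQ.mem_or_mem hs).resolve_right hwQ, fun hs => Q.mul_mem_right _ hs⟩

theorem isAss_self {R : Type*} [CommRing R] {Q : Ideal R} (hQ : Q.IsPrime) : IsAss Q Q :=
  ⟨hQ, 1, fun s => by rw [mul_one]⟩

/-- Describes `(I J + (l)) : w` for an element `w` of `(I + (l)) ∩ (J + (l))`, which is the part of
the quotient by `I J + (l)` not seen modulo `I + (l)` or modulo `J + (l)`. -/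
theorem mul_mem_mul_sup_span_iff {R : Type*} [CommRing R] {I J : Ideal R} {l i j c d w : R}
    (hIJ : I ⊓ J = I * J) (hI : ∀ t, l * t ∈ I → t ∈ I) (hJ : ∀ t, l * t ∈ J → t ∈ J)
    (hi : i ∈ I) (hj : j ∈ J) (hwi : w = i + l * c) (hwj : w = j + l * d) (s : R) :
    s * w ∈ I * J ⊔ Ideal.span {l} ↔ s * (d - c) ∈ I ⊔ J := by
  constructor
  · intro h
    obtain ⟨e, he, z, hz, hez⟩ := Submodule.mem_sup.1 h
    obtain ⟨t, rfl⟩ := Ideal.mem_span_singleton.1 hz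
    obtain ⟨heI, heJ⟩ : e ∈ I ⊓ J := Ideal.mul_le_inf he
    have h1 : t - s * c ∈ I := hI _ (by
      have : l * (t - s * c) = s * i - e := by linear_combination hez + s * hwi
      rw [this]
      exact I.sub_mem (I.mul_mem_left _ hi) heI)
    have h2 : t - s * d ∈ J := hJ _ (by
      have : l * (t - s * d) = s * j - e := by linear_combination hez + s * hwj
      rw [this]
      exact J.sub_mem (J.mul_mem_left _ hj) heJ)
    have : s * (d - c) = (t - s * c) + -(t - s * d) := by ring
    rw [this]
    exact Submodule.add_mem_sup h1 (J.neg_mem h2)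
  · intro h
    obtain ⟨α, hα, β, hβ, hαβ⟩ := Submodule.mem_sup.1 h
    have h1 : s * w - l * (s * c + α) ∈ I * J := by
      rw [← hIJ]
      refine ⟨?_, ?_⟩
      · have : s * w - l * (s * c + α) = s * i - l * α := by linear_combination s * hwi
        rw [this]
        exact I.sub_mem (I.mul_mem_left _ hi) (I.mul_mem_left _ hα)
      · have : s * w - l * (s * c + α) = s * j + l * β := by
          linear_combination s * hwj - l * hαβ
        rw [this]
        exact J.add_mem (J.mul_mem_left _ hj) (J.mul_mem_left _ hβ)
    rw [← sub_add_cancel (s * w) (l * (s * c + α))]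
    exact Submodule.add_mem_sup h1 (Ideal.mul_mem_right _ _ (Ideal.mem_span_singleton_self l))

namespace IsTensorAlg
variable {k A B R : Type*} [Field k] [CommRing A] [CommRing B] [CommRing R]
    [Algebra k A] [Algebra k B] [Algebra k R] {f : A →+* R} {g : B →+* R}

/-- The universal property of the tensor product: existence. -/
theorem exists_lift (h : IsTensorAlg k f g) {S : Type*} [CommRing S] [Algebra k S]
    (u : A →ₐ[k] S) (v : B →ₐ[k] S) :
    ∃ φ : R →ₐ[k] S, (∀ a, φ (f a) = u a) ∧ ∀ b, φ (g b) = v b := by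
  obtain ⟨e, h1, h2⟩ := h
  refine ⟨(Algebra.TensorProduct.productMap u v).comp e.symm.toAlgHom, fun a => ?_, fun b => ?_⟩
  · rw [← h1]; simp
  · rw [← h2]; simp

/-- The universal property of the tensor product: uniqueness, for arbitrary ring homomorphisms. -/
theorem hom_ext (h : IsTensorAlg k f g) {S : Type*} [CommRing S] {φ ψ : R →+* S}
    (hf : ∀ a, φ (f a) = ψ (f a)) (hg : ∀ b, φ (g b) = ψ (g b)) : φ = ψ := by
  obtain ⟨e, h1, h2⟩ := h
  ext r
  obtain ⟨t, rfl⟩ := e.surjective r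
  induction t with
  | zero => simp
  | add x y hx hy => rw [map_add, map_add, map_add, hx, hy]
  | tmul x y =>
    have : e (x ⊗ₜ y) = f x * g y := by
      rw [← h1, ← h2, ← map_mul, Algebra.TensorProduct.tmul_mul_tmul, mul_one, one_mul]
    rw [this, map_mul, map_mul, hf, hg]

/-- The structure maps of a tensor product are `k`-linear. -/
theorem exists_algHom (h : IsTensorAlg k f g) :
    ∃ (f' : A →ₐ[k] R) (g' : B →ₐ[k] R), (∀ a, f' a = f a) ∧ ∀ b, g' b = g b := by
  obtain ⟨e, h1, h2⟩ := h
  exact ⟨e.toAlgHom.comp Algebra.TensorProduct.includeLeft,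
    e.toAlgHom.comp Algebra.TensorProduct.includeRight, fun a => by simp [h1],
    fun b => by simp [h2]⟩

end IsTensorAlg

section Line
variable {k A R τ : Type*} [Field k] [CommRing A] [CommRing R]
    [Algebra k A] [Algebra k R] {f : A →+* R} {g : MvPolynomial τ k →+* R}

namespace IsTensorAlg

/-- The substitution `X b ↦ x` identifies `R ⧸ (f x - g (X b))` with a subring of `R` containing
the image of `A`. -/
theorem exists_retraction (h : IsTensorAlg k f g) (x : A) (b : τ) :
    ∃ φ : R →+* R, (∀ a, φ (f a) = f a) ∧ φ (g (X b)) = f x ∧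
      ∀ w, w - φ w ∈ Ideal.span {f x - g (X b)} := by
  classical
  obtain ⟨f', g', hf', hg'⟩ := h.exists_algHom
  obtain ⟨φ, h1, h2⟩ := h.exists_lift f' (aeval fun t => if t = b then f x else g (X t))
  have hφ : ∀ a, (φ : R →+* R) (f a) = f a := fun a => (h1 a).trans (hf' a)
  refine ⟨φ, hφ, ?_, fun w => ?_⟩
  · exact (h2 _).trans (by simp)
  · rw [← Ideal.Quotient.eq_zero_iff_mem, map_sub, sub_eq_zero]
    let m := Ideal.Quotient.mkₐ k (Ideal.span {f x - g (X b)})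
    have key : m.comp g' = (m.comp φ).comp g' := by
      apply MvPolynomial.algHom_ext
      intro t
      change m (g' (X t)) = m (φ (g' (X t)))
      rw [hg', h2, aeval_X]
      split_ifs with ht
      · subst ht
        refine (Ideal.Quotient.eq.2 ?_).symm
        exact Ideal.mem_span_singleton_self _
      · rfl
    have := h.hom_ext (φ := (m : R →+* R ⧸ Ideal.span {f x - g (X b)}))
       (ψ := (m : R →+* R ⧸ Ideal.span {f x - g (X b)}).comp (φ : R →+* R))
      (fun a => by rw [RingHom.comp_apply, hφ])
      (fun q => by
        have h4 : m (g' q) = m (φ (g' q)) := DFunLike.congr_fun key q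
        simp only [hg'] at h4
        exact h4)
    exact DFunLike.congr_fun this w

/-- Membership in `I R + (f x - g (X b))` is tested by substituting `x` for `X b`. -/
theorem exists_retraction' (h : IsTensorAlg k f g) (x : A) (b : τ) :
    ∃ φ : R →+* R, (∀ a, φ (f a) = f a) ∧ φ (g (X b)) = f x ∧
      ∀ (I : Ideal A) (w : R), w ∈ I.map f ⊔ Ideal.span {f x - g (X b)} ↔ φ w ∈ I.map f := by
  obtain ⟨φ, h1, h2, h3⟩ := h.exists_retraction x b
  have hI : ∀ I : Ideal A, I.map f ≤ (I.map f).comap φ := fun I => by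
    rw [Ideal.map_le_iff_le_comap]
    intro a ha
    rw [Ideal.mem_comap, Ideal.mem_comap, h1]
    exact Ideal.mem_map_of_mem f ha
  refine ⟨φ, h1, h2, fun I w => ⟨fun hw => ?_, fun hw => ?_⟩⟩
  · have : I.map f ⊔ Ideal.span {f x - g (X b)} ≤ (I.map f).comap φ := by
      refine sup_le (hI I) ?_
      rw [Ideal.span_singleton_le_iff_mem, Ideal.mem_comap, map_sub, h1, h2, sub_self]
      exact Ideal.zero_mem _
    exact this hw
  · rw [← add_sub_cancel (φ w) w]
    exact Submodule.add_mem_sup hw (h3 w)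

/-- `R ⧸ (x - X b)` is again a polynomial ring over `A`, hence flat. -/
theorem colonFlat_span (h : IsTensorAlg k f g) (x : A) (b : τ) :
    ColonFlat f (Ideal.span {f x - g (X b)}) := by
  obtain ⟨φ, h1, h2, h3⟩ := h.exists_retraction' x b
  intro I u w hw
  rw [h3, map_mul, h1] at hw
  have := h.colonFlat ⊥ I u (φ w)
  rw [Ideal.map_bot, sup_bot_eq, sup_bot_eq] at this
  exact (h3 _ _).2 (this hw)

theorem sup_span_isPrime (h : IsTensorAlg k f g) (x : A) (b : τ) {p : Ideal A} (hp : p.IsPrime) :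
    (p.map f ⊔ Ideal.span {f x - g (X b)}).IsPrime := by
  obtain ⟨φ, h1, h2, h3⟩ := h.exists_retraction' x b
  have : p.map f ⊔ Ideal.span {f x - g (X b)} = (p.map f).comap φ := by
    ext w
    exact h3 p w
  rw [this]
  have := h.map_isPrime hp
  exact Ideal.comap_isPrime φ _

/-- `Ass(R/(I R + (x - X b)))` consists of the primes `p R + (x - X b)` with `p ∈ Ass(A/I)`. -/
theorem isAss_sup_span_iff [IsNoetherianRing A] (h : IsTensorAlg k f g) (x : A) (b : τ)
    {I : Ideal A} {P : Ideal R} : IsAss (I.map f ⊔ Ideal.span {f x - g (X b)}) P ↔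
      ∃ p, IsAss I p ∧ P = p.map f ⊔ Ideal.span {f x - g (X b)} := by
  rw [(h.colonFlat_span x b).isAss_iff]
  refine exists_congr fun p => and_congr_right fun hp => ?_
  have := h.sup_span_isPrime x b hp.1
  exact ⟨fun hP => hP.eq_of_isPrime this, fun hP => by rw [hP]; exact isAss_self this⟩

/-- `x - X b` is a nonzerodivisor modulo `I R`: up to sign it is monic in the variable `X b`, over
the polynomial ring in the other variables with coefficients in `A ⧸ I`. -/
theorem mem_of_mul_mem (h : IsTensorAlg k f g) (x : A) (b : τ) (I : Ideal A) (w : R)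
    (hw : (f x - g (X b)) * w ∈ I.map f) : w ∈ I.map f := by
  classical
  obtain ⟨f', g', hf', hg'⟩ := h.exists_algHom
  -- view `R ⧸ I R` as polynomials in `X b`, through the map that replaces `X b` by a new variable
  let Q := R ⧸ I.map f
  let m : R →ₐ[k] Q := Ideal.Quotient.mkₐ k (I.map f)
  obtain ⟨ψ, h1, h2⟩ := h.exists_lift (S := Polynomial Q)
    ((Algebra.ofId Q (Polynomial Q)).restrictScalars k |>.comp (m.comp f'))
    (aeval fun t => if t = b then Polynomial.X else Polynomial.C (m (g (X t))))
  have h1' : ∀ a, ψ (f a) = Polynomial.C (m (f a)) := fun a => by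
    rw [h1]
    change Polynomial.C (m (f' a)) = _
    rw [hf']
  have h2' : ψ (g (X b)) = Polynomial.X := by rw [h2, aeval_X, if_pos rfl]
  have hI : I.map f ≤ RingHom.ker ψ := by
    rw [Ideal.map_le_iff_le_comap]
    intro a ha
    rw [Ideal.mem_comap, RingHom.mem_ker, h1']
    have : m (f a) = 0 := Ideal.Quotient.eq_zero_iff_mem.2 (Ideal.mem_map_of_mem f ha)
    rw [this, map_zero]
  have h0 := hI hw
  rw [RingHom.mem_ker, map_mul, map_sub, h1', h2', ← neg_sub, neg_mul, neg_eq_zero] at h0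
  have hψ : ψ w = 0 :=
    (Polynomial.monic_X_sub_C (m (f x))).isRegular.left (h0.trans (mul_zero _).symm)
  -- evaluating the extra variable at `g (X b)` recovers `w` modulo `I`
  have hev : ((Polynomial.evalRingHom (m (g (X b)))).comp (ψ : R →+* Polynomial Q)) =
      (m : R →+* Q) := by
    refine h.hom_ext (fun a => ?_) (fun q => ?_)
    · change Polynomial.eval _ (ψ (f a)) = m (f a)
      rw [h1', Polynomial.eval_C]
    · have : ((Polynomial.aeval (m (g (X b)))).restrictScalars k |>.comp (ψ.comp g')) =
          m.comp g' := by
        apply MvPolynomial.algHom_ext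
        intro t
        change Polynomial.aeval (R := Q) (m (g (X b))) (ψ (g' (X t))) = m (g' (X t))
        rw [hg', h2, aeval_X]
        split_ifs with ht
        · rw [ht, Polynomial.aeval_X]
        · rw [Polynomial.aeval_C]; rfl
      have h4 := DFunLike.congr_fun this q
      change Polynomial.aeval (R := Q) (m (g (X b))) (ψ (g' q)) = m (g' q) at h4
      rw [hg'] at h4
      change Polynomial.eval _ (ψ (g q)) = m (g q)
      rw [← h4, Polynomial.aeval_def, Polynomial.eval₂_eq_eval_map]
      simp
  have h5 := DFunLike.congr_fun hev w
  change Polynomial.eval _ (ψ w) = m w at h5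
  rw [hψ, Polynomial.eval_zero] at h5
  exact Ideal.Quotient.eq_zero_iff_mem.1 h5.symm

end IsTensorAlg
end Line

/-! ### The grading and the associated primes of `I J + (ℓ)` -/

/-- The map `X i ↦ X i * s` into polynomials in a new variable `s`, which records the grading: the
coefficient of `s ^ n` in the image of `f` is the homogeneous component of `f` of degree `n`. -/
noncomputable def gradMap (k σ : Type*) [Field k] :
    MvPolynomial σ k →ₐ[k] Polynomial (MvPolynomial σ k) :=
  aeval fun i => Polynomial.C (X i) * Polynomial.X

theorem coeff_gradMap {k σ : Type*} [Field k] (f : MvPolynomial σ k) (n : ℕ) :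
    (gradMap k σ f).coeff n = homogeneousComponent n f := by
  induction f using MvPolynomial.induction_on' with
  | monomial d r =>
    have h1 : gradMap k σ (monomial d r) = Polynomial.C (monomial d r) * Polynomial.X ^ d.degree := by
      rw [gradMap, aeval_monomial]
      simp only [mul_pow, Finsupp.prod_mul]
      rw [← mul_assoc]
      congr 1
      · rw [MvPolynomial.monomial_eq, map_mul, Finsupp.prod, Finsupp.prod, map_prod]
        simp only [map_pow]
        rfl
      · rw [Finsupp.prod, Finset.prod_pow_eq_pow_sum]
        rfl
    rw [h1, Polynomial.coeff_C_mul_X_pow, homogeneousComponent_of_mem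
      ((mem_homogeneousSubmodule _ _).2 (isHomogeneous_monomial r rfl))]
  | add p q hp hq => rw [map_add, Polynomial.coeff_add, hp, hq, map_add]

theorem homogeneousComponent_mul' {k σ : Type*} [Field k] (f u : MvPolynomial σ k) (n : ℕ) :
    homogeneousComponent n (f * u) = ∑ x ∈ Finset.HasAntidiagonal.antidiagonal n,
      homogeneousComponent x.1 f * homogeneousComponent x.2 u := by
  simp only [← coeff_gradMap, map_mul, Polynomial.coeff_mul]

/-- The associated primes of a homogeneous ideal consist of polynomials without constant term. If
`f * u ∈ I` and `f` has nonzero constant term, the components of `u` lie in `I`, by induction on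
the degree. -/
theorem IsAss.constantCoeff_eq_zero {k σ : Type*} [Field k] {I p : Ideal (MvPolynomial σ k)}
    (hI : IsHomogeneousIdeal I) (h : IsAss I p) {f : MvPolynomial σ k} (hf : f ∈ p) :
    constantCoeff f = 0 := by
  obtain ⟨hp, u, hu⟩ := h
  by_contra hc
  have key : ∀ n, homogeneousComponent n u ∈ I := by
    intro n
    induction n using Nat.strong_induction_on with
    | _ n ih =>
      have h1 := hI _ ((hu f).1 hf) n
      rw [homogeneousComponent_mul', Finset.Nat.antidiagonal_eq_map,
        Finset.sum_map, Finset.sum_range_succ'] at h1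
      change ∑ m ∈ Finset.range n, homogeneousComponent (m + 1) f *
        homogeneousComponent (n - (m + 1)) u + homogeneousComponent 0 f * homogeneousComponent n u
          ∈ I at h1
      rw [homogeneousComponent_zero] at h1
      rw [Ideal.add_mem_iff_right _ (Ideal.sum_mem _ fun i hi => I.mul_mem_left _
        (ih _ (by rw [Finset.mem_range] at hi; omega)))] at h1
      have h2 := I.mul_mem_left (C (constantCoeff f)⁻¹) h1
      rwa [← mul_assoc, ← C_mul, ← constantCoeff_eq, inv_mul_cancel₀ hc, C_1, one_mul] at h2
  apply hp.ne_top
  rw [Ideal.eq_top_iff_one, hu, one_mul, ← sum_homogeneousComponent u]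
  exact Ideal.sum_mem _ fun n _ => key n

namespace IsTensorAlg

section
variable {k σ τ R : Type*} [Field k] [CommRing R] [Algebra k R] {f : MvPolynomial σ k →+* R}
  {g : MvPolynomial τ k →+* R}

/-- The primes `p R + (x - y)` are associated to `I J + (x - y)`. If `p = (I : u)` and `y ^ n` is
the largest power of `y` dividing all of `J`, a witness is `u * F` for any `F ∈ J` not divisible by
`y ^ (n + 1)`: modulo `x - y` the factor `y ^ n` becomes `x ^ n` and cancels, while `F / y ^ n`
lies outside `p R + (x - y)`. -/
theorem isAss_mul_sup_span [IsDomain R] (h : IsTensorAlg k f g) {a : σ} (b : τ)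
    (hfa : f (X a) ≠ 0)
    {I p : Ideal (MvPolynomial σ k)} (hI : IsHomogeneousIdeal I) (hp : IsAss I p)
    {J : Ideal (MvPolynomial τ k)} (hJ : J ≠ ⊥) :
    IsAss (I.map f * J.map g ⊔ Ideal.span {f (X a) - g (X b)})
      (p.map f ⊔ Ideal.span {f (X a) - g (X b)}) := by
  classical
  obtain ⟨u, hu⟩ := hp.2
  have hprime := h.sup_span_isPrime (X a) b hp.1
  -- the largest power `n` of the variable `X b` dividing every element of `J`
  obtain ⟨f0, hf0, hf00⟩ := Submodule.exists_mem_ne_zero_of_ne_bot hJ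
  have hex : ∃ n, ∃ F ∈ J, ¬ (X b : MvPolynomial τ k) ^ (n + 1) ∣ F := by
    obtain ⟨n, hn⟩ := FiniteMultiplicity.of_prime_left (X_prime (R := k) (i := b)) hf00
    exact ⟨n, f0, hf0, hn⟩
  obtain ⟨F, hFJ, hF⟩ := Nat.find_spec hex
  set n := Nat.find hex with hn
  have hJn : ∀ G ∈ J, (X b : MvPolynomial τ k) ^ n ∣ G := by
    intro G hG
    rcases Nat.eq_zero_or_pos n with h0 | h0
    · rw [h0, pow_zero]; exact one_dvd _
    · have := Nat.find_min hex (m := n - 1) (by omega)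
      push Not at this
      have := this G hG
      rwa [Nat.sub_add_cancel h0] at this
  obtain ⟨F', rfl⟩ := hJn F hFJ
  have hF' : ¬ (X b : MvPolynomial τ k) ∣ F' := by
    rintro ⟨c, rfl⟩
    exact hF ⟨c, by ring⟩
  have hgF' : g F' ∉ p.map f ⊔ Ideal.span {f (X a) - g (X b)} := by
    -- setting `X b` and all variables of the first factor to zero kills the ideal but not `g F'`
    let S := MvPolynomial τ k ⧸ Ideal.span {(X b : MvPolynomial τ k)}
    obtain ⟨ε, h1, h2⟩ := h.exists_lift (S := S)
      ((Algebra.ofId k S).comp (aeval fun _ => 0))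
      (Ideal.Quotient.mkₐ k (Ideal.span {(X b : MvPolynomial τ k)}))
    have hle : p.map f ⊔ Ideal.span {f (X a) - g (X b)} ≤ RingHom.ker ε := by
      refine sup_le ?_ ?_
      · rw [Ideal.map_le_iff_le_comap]
        intro c hc
        rw [Ideal.mem_comap, RingHom.mem_ker, h1, AlgHom.comp_apply,
          aeval_zero', hp.constantCoeff_eq_zero hI hc]
        simp
      · rw [Ideal.span_singleton_le_iff_mem, RingHom.mem_ker, map_sub, h1, h2, AlgHom.comp_apply,
          aeval_X, map_zero, zero_sub, neg_eq_zero]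
        exact Ideal.Quotient.eq_zero_iff_mem.2 (Ideal.mem_span_singleton_self _)
    intro hg
    have h3 := hle hg
    rw [RingHom.mem_ker, h2] at h3
    exact hF' (Ideal.mem_span_singleton.1 (Ideal.Quotient.eq_zero_iff_mem.1 h3))
  have hpu : p = I.colon {u} := by ext; rw [hu, mem_colon_el]
  refine ⟨hprime, f u * g (X b ^ n * F'), fun s => ⟨fun hs => ?_, fun hs => ?_⟩⟩
  · rw [hpu, ← (h.colonFlat_span (X a) b).mem_iff] at hs
    obtain ⟨i, hi, z, hz, hiz⟩ := Submodule.mem_sup.1 hs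
    have : s * (f u * g (X b ^ n * F')) = i * g (X b ^ n * F') + z * g (X b ^ n * F') := by
      linear_combination - g (X b ^ n * F') * hiz
    rw [this]
    exact Submodule.add_mem_sup (Ideal.mul_mem_mul hi (Ideal.mem_map_of_mem g hFJ))
      (Ideal.mul_mem_right _ _ hz)
  · obtain ⟨φ, h1, h2, h3⟩ := h.exists_retraction' (X a) b
    obtain ⟨e, he, z, hz, hez⟩ := Submodule.mem_sup.1 hs
    obtain ⟨t, rfl⟩ := Ideal.mem_span_singleton.1 hz
    have hJle : J.map g ≤ Ideal.span {g (X b) ^ n} := by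
      rw [Ideal.map_le_iff_le_comap]
      intro G hG
      rw [Ideal.mem_comap, Ideal.mem_span_singleton, ← map_pow]
      exact map_dvd g (hJn G hG)
    have he' := Ideal.mul_mono_right hJle he
    rw [mul_comm, Ideal.mem_span_singleton_mul] at he'
    obtain ⟨e', he', rfl⟩ := he'
    have hφe : φ e' ∈ I.map f := (h3 I e').1 (Ideal.mem_sup_left he')
    have h4 := congrArg φ hez
    simp only [map_add, map_mul, map_sub, map_pow, h1, h2, sub_self, zero_mul, add_zero] at h4
    have h5 : φ (f u * (s * g F')) = φ e' := by
      apply mul_left_cancel₀ (pow_ne_zero n hfa)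
      rw [h4, map_mul, map_mul, h1]
      ring
    have h6 : f u * (s * g F') ∈ I.map f ⊔ Ideal.span {f (X a) - g (X b)} := by
      rw [h3, h5]
      exact hφe
    rw [(h.colonFlat_span (X a) b).mem_iff, ← hpu] at h6
    exact (hprime.mem_or_mem h6).resolve_right hgF'

/-- An associated prime of `I R + J R` that contains `x - y` contains `y`. Grade `R` by the degree
in the variables of `A` only; then `I R + J R` is homogeneous, `x` has degree `1` and `y` has
degree `0`. If `(x - y) * w ∈ I R + J R`, then `y * w₀` and all `y * w_{n+1} - x * w_n` lie in
`I R + J R`, hence so does `y ^ N * w` for large `N`. -/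
theorem mem_of_sub_mem (h : IsTensorAlg k f g) {a : σ} {b : τ}
    {I : Ideal (MvPolynomial σ k)} (hI : IsHomogeneousIdeal I) {J : Ideal (MvPolynomial τ k)}
    {P : Ideal R} (hP : IsAss (I.map f ⊔ J.map g) P) (hl : f (X a) - g (X b) ∈ P) :
    g (X b) ∈ P := by
  obtain ⟨hPp, w, hw⟩ := hP
  obtain ⟨f', g', hf', hg'⟩ := h.exists_algHom
  -- `θ` multiplies the variables of the first factor, and only those, by a new variable
  obtain ⟨θ, h1, h2⟩ := h.exists_lift (S := Polynomial R)
    ((Polynomial.mapAlgHom f').comp (gradMap k σ))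
    (Polynomial.CAlgHom.comp g')
  have h1' : ∀ c n, (θ (f c)).coeff n = f (homogeneousComponent n c) := fun c n => by
    rw [h1, AlgHom.comp_apply, Polynomial.coe_mapAlgHom, Polynomial.coeff_map, coeff_gradMap]
    exact hf' _
  have h2' : ∀ c, θ (g c) = Polynomial.C (g c) := fun c => by
    rw [h2, AlgHom.comp_apply, hg']
    rfl
  have hfa : θ (f (X a)) = Polynomial.C (f (X a)) * Polynomial.X := by
    rw [h1, AlgHom.comp_apply, gradMap, aeval_X]
    simp [hf']
  have hK : ∀ v ∈ I.map f ⊔ J.map g, ∀ n, (θ v).coeff n ∈ I.map f ⊔ J.map g := by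
    have : I.map f ⊔ J.map g ≤
        ((I.map f ⊔ J.map g).map (Polynomial.C : R →+* Polynomial R)).comap θ := by
      refine sup_le ?_ ?_
      · rw [Ideal.map_le_iff_le_comap]
        intro c hc
        rw [Ideal.mem_comap, Ideal.mem_comap, Ideal.mem_map_C_iff]
        intro n
        rw [h1']
        exact Ideal.mem_sup_left (Ideal.mem_map_of_mem f (hI c hc n))
      · rw [Ideal.map_le_iff_le_comap]
        intro c hc
        rw [Ideal.mem_comap, Ideal.mem_comap, h2']
        exact Ideal.mem_map_of_mem _ (Ideal.mem_sup_right (Ideal.mem_map_of_mem g hc))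
    intro v hv
    exact Ideal.mem_map_C_iff.1 (this hv)
  -- setting the grading variable to `1` recovers `w`
  have hev : ((Polynomial.evalRingHom 1).comp (θ : R →+* Polynomial R)) = RingHom.id R := by
    refine h.hom_ext (fun c => ?_) (fun c => ?_)
    · have : ((Polynomial.aeval (1 : R)).restrictScalars k |>.comp (θ.comp f')) = f' := by
        apply MvPolynomial.algHom_ext
        intro t
        change Polynomial.aeval (1 : R) (θ (f' (X t))) = f' (X t)
        rw [hf', h1, AlgHom.comp_apply, gradMap, aeval_X]
        simp [hf']
      have h4 : Polynomial.aeval (1 : R) (θ (f' c)) = f' c := DFunLike.congr_fun this c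
      rw [hf', Polynomial.coe_aeval_eq_eval] at h4
      exact h4
    · change Polynomial.eval 1 (θ (g c)) = g c
      rw [h2', Polynomial.eval_C]
  have hwev : Polynomial.eval 1 (θ w) = w := DFunLike.congr_fun hev w
  have hlw := hK _ ((hw _).1 hl)
  have hpow : ∀ n, g (X b) ^ (n + 1) * (θ w).coeff n ∈ I.map f ⊔ J.map g := by
    intro n
    induction n with
    | zero =>
      have := hlw 0
      rw [map_mul, map_sub, hfa, h2', sub_mul, mul_assoc, Polynomial.coeff_sub,
        Polynomial.coeff_C_mul, Polynomial.coeff_X_mul_zero, mul_zero, zero_sub,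
        Polynomial.coeff_C_mul, neg_mem_iff] at this
      rwa [zero_add, pow_one]
    | succ n ih =>
      have := hlw (n + 1)
      rw [map_mul, map_sub, hfa, h2', sub_mul, mul_assoc, Polynomial.coeff_sub,
        Polynomial.coeff_C_mul, Polynomial.coeff_X_mul, Polynomial.coeff_C_mul] at this
      have h5 : g (X b) ^ (n + 1 + 1) * (θ w).coeff (n + 1) =
          f (X a) * (g (X b) ^ (n + 1) * (θ w).coeff n) - g (X b) ^ (n + 1) *
            (f (X a) * (θ w).coeff n - g (X b) * (θ w).coeff (n + 1)) := by ring
      rw [h5]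
      exact Ideal.sub_mem _ (Ideal.mul_mem_left _ _ ih) (Ideal.mul_mem_left _ _ this)
  have hN : g (X b) ^ ((θ w).natDegree + 1) ∈ P := by
    have hsum : w = ∑ n ∈ Finset.range ((θ w).natDegree + 1), (θ w).coeff n * 1 ^ n := by
      rw [← Polynomial.eval_eq_sum_range, hwev]
    have : g (X b) ^ ((θ w).natDegree + 1) * w = ∑ n ∈ Finset.range ((θ w).natDegree + 1),
        g (X b) ^ ((θ w).natDegree + 1) * ((θ w).coeff n * 1 ^ n) := by
      rw [← Finset.mul_sum, ← hsum]
    rw [hw, this]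
    refine Ideal.sum_mem _ fun n hn => ?_
    rw [Finset.mem_range] at hn
    obtain ⟨m, hm⟩ := Nat.exists_eq_add_of_le (show n + 1 ≤ (θ w).natDegree + 1 by omega)
    rw [hm, pow_add, one_pow, mul_one, mul_right_comm]
    exact Ideal.mul_mem_right _ _ (hpow n)
  exact hPp.mem_of_pow_mem _ hN

/-- The description of `Ass(R/(I J + (x - y)))` for an abstract tensor product of polynomial
rings. -/
theorem isAss_mul_sup_span_iff [Finite σ] [Finite τ] [IsDomain R] [IsNoetherianRing R]
    (h : IsTensorAlg k f g) {a : σ} {b : τ}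
    (hfa : f (X a) ≠ 0) (hgb : g (X b) ≠ 0)
    {I : Ideal (MvPolynomial σ k)} (hI : IsHomogeneousIdeal I) (hI0 : I ≠ ⊥)
    {J : Ideal (MvPolynomial τ k)} (hJ : IsHomogeneousIdeal J) (hJ0 : J ≠ ⊥) {P : Ideal R} :
    IsAss (I.map f * J.map g ⊔ Ideal.span {f (X a) - g (X b)}) P ↔
      (∃ p, IsAss I p ∧ P = p.map f ⊔ Ideal.span {f (X a) - g (X b)}) ∨
      (∃ q, IsAss J q ∧ P = q.map g ⊔ Ideal.span {f (X a) - g (X b)}) ∨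
      ∃ p q, IsAss I p ∧ IsAss J q ∧ X a ∈ p ∧ X b ∈ q ∧
        P ∈ (p.map f ⊔ q.map g).minimalPrimes := by
  have hneg : Ideal.span {g (X b) - f (X a)} = Ideal.span {f (X a) - g (X b)} := by
    rw [← neg_sub, Ideal.span_singleton_neg]
  have hregI := h.mem_of_mul_mem (X a) b I
  have hregJ : ∀ t, (f (X a) - g (X b)) * t ∈ J.map g → t ∈ J.map g := fun t ht => by
    refine h.symm.mem_of_mul_mem (X b) a J t ?_
    rw [← neg_sub, neg_mul, neg_mem_iff]
    exact ht
  have hinf := h.inf_eq_mul I J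
  constructor
  · intro hP
    rcases hP.dichotomy ((I.map f ⊔ Ideal.span {f (X a) - g (X b)}) ⊓
      (J.map g ⊔ Ideal.span {f (X a) - g (X b)})) (le_inf
        (sup_le_sup_right (Ideal.mul_le_inf.trans inf_le_left) _)
        (sup_le_sup_right (Ideal.mul_le_inf.trans inf_le_right) _)) with
      hP' | ⟨w, ⟨hwI, hwJ⟩, hw⟩
    · -- a prime that is an intersection of two ideals is one of them
      obtain ⟨hPp, w, hw⟩ := hP'
      have hPI : P = (I.map f ⊔ Ideal.span {f (X a) - g (X b)}).colon {w} ⊓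
          (J.map g ⊔ Ideal.span {f (X a) - g (X b)}).colon {w} := by
        ext s
        rw [hw, Submodule.mem_inf, Submodule.mem_inf, mem_colon_el, mem_colon_el]
      rcases (hPp.inf_le).1 hPI.ge with h1 | h1
      · refine Or.inl ((h.isAss_sup_span_iff (X a) b).1 ⟨hPp, w, fun s => ?_⟩)
        rw [← mem_colon_el, le_antisymm (hPI.le.trans inf_le_left) h1]
      · refine Or.inr (Or.inl ?_)
        rw [← hneg]
        refine (h.symm.isAss_sup_span_iff (X b) a).1 ⟨hPp, w, fun s => ?_⟩
        rw [hneg, ← mem_colon_el, le_antisymm (hPI.le.trans inf_le_right) h1]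
    · obtain ⟨i, hi, z, hz, hiz⟩ := Submodule.mem_sup.1 hwI
      obtain ⟨c, rfl⟩ := Ideal.mem_span_singleton.1 hz
      obtain ⟨j, hj, z', hz', hjz⟩ := Submodule.mem_sup.1 hwJ
      obtain ⟨d, rfl⟩ := Ideal.mem_span_singleton.1 hz'
      have hP2 : IsAss (I.map f ⊔ J.map g) P := ⟨hP.1, d - c, fun s => by
        rw [hw, mul_mem_mul_sup_span_iff hinf hregI hregJ hi hj hiz.symm hjz.symm]⟩
      have hl : f (X a) - g (X b) ∈ P := by
        rw [hw]
        exact Ideal.mem_sup_right (Ideal.mul_mem_right _ _ (Ideal.mem_span_singleton_self _))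
      have hb : g (X b) ∈ P := h.mem_of_sub_mem hI hP2 hl
      have ha : f (X a) ∈ P := by
        rw [← sub_add_cancel (f (X a)) (g (X b))]
        exact P.add_mem hl hb
      obtain ⟨p, q, hp, hq, hPpq⟩ := h.isAss_sup_iff.1 hP2
      have hPpq' := (h.isAss_iff_mem_minimalPrimes hp.1 hq.1).2 hPpq
      refine Or.inr (Or.inr ⟨p, q, hp, hq, ?_, ?_, hPpq⟩)
      · rw [← h.comap_eq hp.1 hPpq']
        exact ha
      · rw [sup_comm] at hPpq'
        rw [← h.symm.comap_eq hq.1 hPpq']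
        exact hb
  · rintro (⟨p, hp, rfl⟩ | ⟨q, hq, rfl⟩ | ⟨p, q, hp, hq, ha, hb, hP⟩)
    · exact h.isAss_mul_sup_span b hfa hI hp hJ0
    · rw [mul_comm, ← hneg]
      exact h.symm.isAss_mul_sup_span a hgb hJ hq hI0
    · have hl : f (X a) - g (X b) ∈ P := P.sub_mem
        (hP.1.2 (Ideal.mem_sup_left (Ideal.mem_map_of_mem f ha)))
        (hP.1.2 (Ideal.mem_sup_right (Ideal.mem_map_of_mem g hb)))
      obtain ⟨hPp, v, hv⟩ := h.isAss_sup_iff.2 ⟨p, q, hp, hq, hP⟩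
      obtain ⟨i, hi, j, hj, hij⟩ := Submodule.mem_sup.1 ((hv _).1 hl)
      -- `f (X a) - g (X b)` times the witness `v` is `i + j`, so `v` comes from the element
      -- `i = i + ℓ * 0 = -j + ℓ * v` of the intersection
      refine ⟨hPp, i, fun s => ?_⟩
      rw [mul_mem_mul_sup_span_iff hinf hregI hregJ (c := 0) (d := v) hi (J.map g |>.neg_mem hj)
        (by ring) (by linear_combination hij), sub_zero, hv]

end
end IsTensorAlg

theorem isTensorAlg_rename (k σ τ : Type*) [Field k] :
    IsTensorAlg k
      ((rename Sum.inl : MvPolynomial σ k →ₐ[k] MvPolynomial (σ ⊕ τ) k) :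
        MvPolynomial σ k →+* MvPolynomial (σ ⊕ τ) k)
      ((rename Sum.inr : MvPolynomial τ k →ₐ[k] MvPolynomial (σ ⊕ τ) k) :
        MvPolynomial τ k →+* MvPolynomial (σ ⊕ τ) k) := by
  let e := MvPolynomial.tensorEquivSum k σ τ k
  have h1 : e.toAlgHom.comp Algebra.TensorProduct.includeLeft =
      (rename Sum.inl : MvPolynomial σ k →ₐ[k] MvPolynomial (σ ⊕ τ) k) := by
    apply MvPolynomial.algHom_ext
    intro i
    simp [e]
  have h2 : e.toAlgHom.comp Algebra.TensorProduct.includeRight =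
      (rename Sum.inr : MvPolynomial τ k →ₐ[k] MvPolynomial (σ ⊕ τ) k) := by
    apply MvPolynomial.algHom_ext
    intro i
    simp [e]
  exact ⟨e, fun a => DFunLike.congr_fun h1 a, fun b => DFunLike.congr_fun h2 b⟩

/-- **Proposition 6.5**: for nonzero proper homogeneous ideals `I ⊆ A = k[X]`, `J ⊆ B = k[Y]`,
`R = k[X,Y]`, a variable `x` of `A` and a variable `y` of `B`, the associated primes of
`R/(IJ + (x - y))` are exactly: the primes `pR + (x-y)` with `p ∈ Ass_A(A/I)`, the primes
`qR + (x-y)` with `q ∈ Ass_B(B/J)`, and the minimal primes of `pR + qR` for `p ∈ Ass_A(A/I)`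
with `x ∈ p` and `q ∈ Ass_B(B/J)` with `y ∈ q`. -/
theorem associatedPrimes_product_plus_linear
    {k : Type} [Field k] {σ τ : Type} [Fintype σ] [Fintype τ]
    (I : Ideal (MvPolynomial σ k)) (J : Ideal (MvPolynomial τ k))
    (hIbot : I ≠ ⊥) (hItop : I ≠ ⊤) (hIhom : IsHomogeneousIdeal I)
    (hJbot : J ≠ ⊥) (hJtop : J ≠ ⊤) (hJhom : IsHomogeneousIdeal J)
    (a : σ) (b : τ)
    (IR JR : Ideal (MvPolynomial (σ ⊕ τ) k))
    (hIR : IR = Ideal.map (rename Sum.inl : MvPolynomial σ k →ₐ[k] MvPolynomial (σ ⊕ τ) k) I)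
    (hJR : JR = Ideal.map (rename Sum.inr : MvPolynomial τ k →ₐ[k] MvPolynomial (σ ⊕ τ) k) J) :
    associatedPrimes (MvPolynomial (σ ⊕ τ) k)
        (MvPolynomial (σ ⊕ τ) k ⧸
          (IR * JR + Ideal.span {(X (Sum.inl a) : MvPolynomial (σ ⊕ τ) k) - X (Sum.inr b)})) =
      {P | ∃ p ∈ associatedPrimes (MvPolynomial σ k) (MvPolynomial σ k ⧸ I),
          P = Ideal.map (rename Sum.inl : MvPolynomial σ k →ₐ[k] MvPolynomial (σ ⊕ τ) k) p +
              Ideal.span {(X (Sum.inl a) : MvPolynomial (σ ⊕ τ) k) - X (Sum.inr b)}} ∪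
      {P | ∃ q ∈ associatedPrimes (MvPolynomial τ k) (MvPolynomial τ k ⧸ J),
          P = Ideal.map (rename Sum.inr : MvPolynomial τ k →ₐ[k] MvPolynomial (σ ⊕ τ) k) q +
              Ideal.span {(X (Sum.inl a) : MvPolynomial (σ ⊕ τ) k) - X (Sum.inr b)}} ∪
      {P | ∃ p ∈ associatedPrimes (MvPolynomial σ k) (MvPolynomial σ k ⧸ I),
           ∃ q ∈ associatedPrimes (MvPolynomial τ k) (MvPolynomial τ k ⧸ J),
          X a ∈ p ∧ X b ∈ q ∧
          P ∈ (Ideal.map (rename Sum.inl : MvPolynomial σ k →ₐ[k] MvPolynomial (σ ⊕ τ) k) p +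
               Ideal.map (rename Sum.inr : MvPolynomial τ k →ₐ[k] MvPolynomial (σ ⊕ τ) k) q).minimalPrimes} := by
  have h := isTensorAlg_rename k σ τ
  have hfa : (rename Sum.inl : MvPolynomial σ k →ₐ[k] MvPolynomial (σ ⊕ τ) k) (X a) =
      X (Sum.inl a) := rename_X _ _
  have hgb : (rename Sum.inr : MvPolynomial τ k →ₐ[k] MvPolynomial (σ ⊕ τ) k) (X b) =
      X (Sum.inr b) := rename_X _ _
  ext P
  rw [mem_associatedPrimes_iff_isAss, hIR, hJR, ← hfa, ← hgb]
  refine (h.isAss_mul_sup_span_iff (by simp) (by simp) hIhom hIbot hJhom hJbot).trans ?_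
  simp only [Set.mem_union, Set.mem_ofPred_eq, mem_associatedPrimes_iff_isAss, or_assoc]
  refine or_congr_right (or_congr_right ?_)
  constructor
  · rintro ⟨p, q, hp, hq, h1⟩
    exact ⟨p, hp, q, hq, h1⟩
  · rintro ⟨p, hp, q, hq, h1⟩
    exact ⟨p, q, hp, hq, h1⟩
end

section
/- Let k be a field and let A and B be commutative Noetherian k-algebras such that R = A ⊗_k B is Noetherian. Let p ⊆ A and q ⊆ B be prime ideals and let P be an associated prime of R/(pR + qR). Then (i) P ∩ A = p and P ∩ B = q, and (ii) P is a minimal prime of pR + qR; in particular Ass_R(R/(pR+qR)) = Min_R(R/(pR+qR)). -/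
open TensorProduct

/-!
Passing to `A/p` and `B/q` replaces `R/(pR + qR)` by `S = A ⊗ₖ B` with `A`, `B` domains, and every
element of an associated prime `P` kills one fixed nonzero element of `S`.

*Contractions.* Over a field everything is flat, so multiplication by `a ⊗ 1` or `1 ⊗ b` with
`a, b ≠ 0` is injective on `S`; hence `P` contracts to `0` in both factors.

*Minimality.* Let `C ⊆ A` be the polynomial ring on a transcendence basis of `A` over `k`. Then
`C ⊗ₖ B` is a polynomial ring over the domain `B`, hence a domain, and `S` is torsion-free over it:
`S` embeds in `Frac A ⊗ₖ B = Frac A ⊗_C (C ⊗ₖ B)`, and `Frac A` is flat over `C`. So `P` meets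
`C ⊗ₖ B` in `0`. If `Q ⊊ P` were prime, then `S/Q` would be a domain containing `C ⊗ₖ B` and
algebraic over it, since `A` is algebraic over `C`. A nonzero ideal of such an extension, such
as `P/Q`, contracts to a nonzero ideal of `C ⊗ₖ B`, a contradiction.
-/

namespace SumOfPrimes

section Domains

variable {k A B : Type} [Field k] [CommRing A] [CommRing B] [Algebra k A] [Algebra k B]

lemma eq_zero_of_tmul_one_mul [IsDomain A] {a : A} (ha : a ≠ 0) {s : A ⊗[k] B}
    (h : (a ⊗ₜ[k] (1 : B)) * s = 0) : s = 0 := by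
  have hinj := Module.Flat.rTensor_preserves_injective_linearMap (M := B) (LinearMap.mulLeft k a)
    (fun x y hxy => mul_left_cancel₀ ha hxy)
  have key : ∀ t : A ⊗[k] B,
      (LinearMap.mulLeft k a).rTensor B t = (a ⊗ₜ[k] (1 : B)) * t := by
    intro t
    induction t with
    | zero => simp
    | tmul x y => simp
    | add x y hx hy => rw [map_add, hx, hy, mul_add]
  exact hinj (by rw [key, h, map_zero])

lemma eq_zero_of_one_tmul_mul [IsDomain B] {b : B} (hb : b ≠ 0) {s : A ⊗[k] B}
    (h : ((1 : A) ⊗ₜ[k] b) * s = 0) : s = 0 := by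
  have hinj := Module.Flat.lTensor_preserves_injective_linearMap (M := A) (LinearMap.mulLeft k b)
    (fun x y hxy => mul_left_cancel₀ hb hxy)
  have key : ∀ t : A ⊗[k] B,
      (LinearMap.mulLeft k b).lTensor A t = ((1 : A) ⊗ₜ[k] b) * t := by
    intro t
    induction t with
    | zero => simp
    | tmul x y => simp
    | add x y hx hy => rw [map_add, hx, hy, mul_add]
  exact hinj (by rw [key, h, map_zero])

/-- A field is flat over any subring, being a vector space over the fraction field of that
subring. -/
lemma flat_of_injective {C K : Type} [CommRing C] [IsDomain C] [Field K] [Algebra C K]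
    (h : Function.Injective (algebraMap C K)) : Module.Flat C K := by
  have : FaithfulSMul C K := (faithfulSMul_iff_algebraMap_injective _ _).2 h
  let _ : Algebra (FractionRing C) K := FractionRing.liftAlgebra C K
  have : IsScalarTower C (FractionRing C) K := FractionRing.isScalarTower_liftAlgebra C K
  have : Module.Flat C (FractionRing C) := IsLocalization.flat _ (nonZeroDivisors C)
  have : Module.Flat (FractionRing C) K := Module.Flat.of_free
  exact Module.Flat.trans C (FractionRing C) K

/-- If `K` is flat over `C` and `C ⊗ₖ B` is a domain, then `K ⊗ₖ B` is torsion-free over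
`C ⊗ₖ B`. -/
lemma eq_zero_of_flat {C K : Type} [CommRing C] [CommRing K] [Algebra k C] [Algebra k K]
    [Algebra C K] [IsScalarTower k C K] [Module.Flat C K] [IsDomain (C ⊗[k] B)]
    {d : C ⊗[k] B} (hd : d ≠ 0) {t : K ⊗[k] B}
    (h : Algebra.TensorProduct.map (IsScalarTower.toAlgHom k C K) (AlgHom.id k B) d * t = 0) :
    t = 0 := by
  let e := TensorProduct.AlgebraTensorModule.cancelBaseChange k C C K B
  let g : C ⊗[k] B →ₗ[C] C ⊗[k] B := LinearMap.mulLeft C d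
  have hg : Function.Injective (g.lTensor K) :=
    Module.Flat.lTensor_preserves_injective_linearMap (M := K) g
      (fun x y hxy => mul_left_cancel₀ hd hxy)
  -- Under `K ⊗_C (C ⊗ₖ B) = K ⊗ₖ B`, the base change of multiplication by `d` is
  -- multiplication by the image of `d`.
  have key : ∀ t, e (g.lTensor K t) =
      Algebra.TensorProduct.map (IsScalarTower.toAlgHom k C K) (AlgHom.id k B) d * e t := by
    intro t
    induction t with
    | zero => simp
    | add x y hx hy => rw [map_add, map_add, map_add, hx, hy, mul_add]
    | tmul x y =>
      simp only [g, LinearMap.lTensor_tmul, LinearMap.mulLeft_apply]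
      clear * -
      induction d with
      | zero => simp
      | add u v hu hv => rw [add_mul, tmul_add, map_add, hu, hv, map_add, add_mul]
      | tmul c b =>
        induction y with
        | zero => simp
        | add u v hu hv => rw [mul_add, tmul_add, map_add, hu, hv, tmul_add, map_add, mul_add]
        | tmul c' b' => simp [e, Algebra.smul_def, mul_assoc]
  have h0 : e.symm t = 0 := hg (e.injective (by rw [key, e.apply_symm_apply, h]; simp))
  simpa using h0

/-- If `A` and `C ⊗ₖ B` are domains, where `C ⊆ A`, then `A ⊗ₖ B` is torsion-free over
`C ⊗ₖ B`. -/
lemma eq_zero_of_map_mul [IsDomain A] {C : Type} [CommRing C] [IsDomain C] [Algebra k C]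
    [Algebra C A] [IsScalarTower k C A] (hC : Function.Injective (algebraMap C A))
    [IsDomain (C ⊗[k] B)] {d : C ⊗[k] B} (hd : d ≠ 0) {s : A ⊗[k] B}
    (h : Algebra.TensorProduct.map (IsScalarTower.toAlgHom k C A) (AlgHom.id k B) d * s = 0) :
    s = 0 := by
  let K := FractionRing A
  have hCK : Function.Injective (algebraMap C K) := by
    rw [IsScalarTower.algebraMap_eq C A K]
    exact (IsFractionRing.injective A K).comp hC
  have : Module.Flat C K := flat_of_injective hCK
  let i : A →ₐ[k] K := IsScalarTower.toAlgHom k A K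
  let j : A ⊗[k] B →ₐ[k] K ⊗[k] B := Algebra.TensorProduct.map i (AlgHom.id k B)
  have hj : Function.Injective j :=
    Module.Flat.rTensor_preserves_injective_linearMap (M := B) i.toLinearMap
      (IsFractionRing.injective A K)
  have hcomp : j.comp (Algebra.TensorProduct.map (IsScalarTower.toAlgHom k C A) (AlgHom.id k B)) =
      Algebra.TensorProduct.map (IsScalarTower.toAlgHom k C K) (AlgHom.id k B) := by
    ext c
    · simp [j, i, ← IsScalarTower.algebraMap_apply]
    · simp [j]
  apply hj
  rw [map_zero]
  refine eq_zero_of_flat (K := K) hd ?_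
  rw [← hcomp, AlgHom.comp_apply, ← map_mul, h, map_zero]

/-- If an ideal `P` of `A ⊗ₖ B` (with `A`, `B` domains) kills a nonzero element, then no prime
lies strictly below `P`. -/
lemma le_of_prime_le_of_annihilates [IsDomain A] [IsDomain B] {P Q : Ideal (A ⊗[k] B)}
    [Q.IsPrime] (hQP : Q ≤ P) {s : A ⊗[k] B} (hs : s ≠ 0) (hP : ∀ x ∈ P, x * s = 0) :
    P ≤ Q := by
  obtain ⟨ι, x, hx⟩ := exists_isTranscendenceBasis' k A
  let C := Algebra.adjoin k (Set.range x)
  have : Algebra.IsAlgebraic C A := hx.isAlgebraic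
  have : IsDomain (C ⊗[k] B) := by
    let e₁ : C ⊗[k] B ≃ₐ[k] MvPolynomial ι k ⊗[k] B :=
      Algebra.TensorProduct.congr hx.1.aevalEquiv.symm AlgEquiv.refl
    let e₂ : C ⊗[k] B ≃ₐ[k] MvPolynomial ι B :=
      (e₁.trans (Algebra.TensorProduct.comm k _ _)).trans
        ((MvPolynomial.algebraTensorAlgEquiv k B).restrictScalars k)
    exact e₂.toMulEquiv.isDomain
  let μ : C ⊗[k] B →ₐ[k] A ⊗[k] B :=
    Algebra.TensorProduct.map (IsScalarTower.toAlgHom k C A) (AlgHom.id k B)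
  have hcontr : ∀ d, μ d ∈ P → d = 0 := fun d hd => by
    by_contra hne
    exact hs (eq_zero_of_map_mul Subtype.val_injective hne (hP _ hd))
  let φ : C ⊗[k] B →+* (A ⊗[k] B) ⧸ Q := (Ideal.Quotient.mk Q).comp μ.toRingHom
  have hφ : Function.Injective φ := (injective_iff_map_eq_zero φ).2 fun d hd =>
    hcontr d (hQP (Ideal.Quotient.eq_zero_iff_mem.1 hd))
  let _ : Algebra (C ⊗[k] B) ((A ⊗[k] B) ⧸ Q) := φ.toAlgebra
  have halg : ∀ y : A ⊗[k] B, IsAlgebraic (C ⊗[k] B) (Ideal.Quotient.mk Q y) := by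
    intro y
    induction y with
    | zero => simpa using isAlgebraic_zero
    | add u v hu hv => rw [map_add]; exact hu.add hv
    | tmul a b =>
      have hab : a ⊗ₜ[k] b = (a ⊗ₜ[k] (1 : B)) * μ ((1 : C) ⊗ₜ[k] b) := by simp [μ]
      rw [hab, map_mul]
      refine IsAlgebraic.mul ?_ (isAlgebraic_algebraMap (A := (A ⊗[k] B) ⧸ Q) ((1 : C) ⊗ₜ[k] b))
      obtain ⟨f, hf0, hf⟩ := Algebra.IsAlgebraic.isAlgebraic (R := C) a
      let l : C →+* C ⊗[k] B := Algebra.TensorProduct.includeLeftRingHom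
      have hl : Function.Injective l :=
        Algebra.TensorProduct.includeLeft_injective (S := k) (FaithfulSMul.algebraMap_injective k B)
      refine ⟨f.map l, (Polynomial.map_ne_zero_iff hl).2 hf0, ?_⟩
      let m : A →+* (A ⊗[k] B) ⧸ Q :=
        (Ideal.Quotient.mk Q).comp Algebra.TensorProduct.includeLeftRingHom
      have hm : (algebraMap (C ⊗[k] B) ((A ⊗[k] B) ⧸ Q)).comp l = m.comp (algebraMap C A) := by
        ext c
        change Ideal.Quotient.mk Q (μ (c ⊗ₜ 1)) = Ideal.Quotient.mk Q ((c : A) ⊗ₜ 1)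
        simp [μ]
      rw [Polynomial.aeval_def, Polynomial.eval₂_map, hm]
      change Polynomial.eval₂ _ (m a) f = 0
      rw [← Polynomial.hom_eval₂, ← Polynomial.aeval_def, hf, map_zero]
  intro y hy
  by_contra hyQ
  refine Ideal.comap_ne_bot_of_algebraic_mem (I := P.map (Ideal.Quotient.mk Q))
    (fun h => hyQ (Ideal.Quotient.eq_zero_iff_mem.1 h)) (Ideal.mem_map_of_mem _ hy) (halg y) ?_
  refine (Submodule.eq_bot_iff _).2 fun d hd => hcontr d ?_
  have hd' : μ d ∈ (P.map (Ideal.Quotient.mk Q)).comap (Ideal.Quotient.mk Q) := hd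
  rwa [Ideal.comap_map_of_surjective _ Ideal.Quotient.mk_surjective, ← RingHom.ker_eq_comap_bot,
    Ideal.mk_ker, sup_eq_left.2 hQP] at hd'

end Domains

variable {k A B : Type} [Field k] [CommRing A] [CommRing B] [Algebra k A] [Algebra k B]

lemma contractions_and_minimal [IsNoetherianRing (A ⊗[k] B)]
    (p : Ideal A) (q : Ideal B) [p.IsPrime] [q.IsPrime] (L : Ideal (A ⊗[k] B))
    (hL : L = Ideal.map (Algebra.TensorProduct.includeLeft : A →ₐ[k] A ⊗[k] B) p +
              Ideal.map (Algebra.TensorProduct.includeRight : B →ₐ[k] A ⊗[k] B) q)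
    (P : Ideal (A ⊗[k] B)) (hP : P ∈ associatedPrimes (A ⊗[k] B) (A ⊗[k] B ⧸ L)) :
    Ideal.comap (Algebra.TensorProduct.includeLeft : A →ₐ[k] A ⊗[k] B) P = p ∧
    Ideal.comap (Algebra.TensorProduct.includeRight : B →ₐ[k] A ⊗[k] B) P = q ∧
    P ∈ L.minimalPrimes := by
  let π : A ⊗[k] B →ₐ[k] (A ⧸ p) ⊗[k] (B ⧸ q) :=
    Algebra.TensorProduct.map (Ideal.Quotient.mkₐ k p) (Ideal.Quotient.mkₐ k q)
  have hπ : Function.Surjective π :=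
    TensorProduct.map_surjective Ideal.Quotient.mk_surjective Ideal.Quotient.mk_surjective
  have hker : RingHom.ker π = L := by
    rw [hL, Submodule.add_eq_sup]
    have := Algebra.TensorProduct.map_ker (Ideal.Quotient.mkₐ k p) (Ideal.Quotient.mkₐ k q)
      Ideal.Quotient.mk_surjective Ideal.Quotient.mk_surjective
    have hp : RingHom.ker (Ideal.Quotient.mkₐ k p) = p := Ideal.Quotient.mkₐ_ker k p
    have hq : RingHom.ker (Ideal.Quotient.mkₐ k q) = q := Ideal.Quotient.mkₐ_ker k q
    rwa [hp, hq] at this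
  obtain ⟨hprime, z, hz⟩ := isAssociatedPrime_iff.1 hP
  obtain ⟨r, rfl⟩ := Ideal.Quotient.mk_surjective z
  have hmem : ∀ y, y ∈ P ↔ π y * π r = 0 := by
    intro y
    rw [hz, Submodule.mem_colon_singleton, Submodule.mem_bot, ← map_mul, ← RingHom.mem_ker, hker,
      ← Ideal.Quotient.eq_zero_iff_mem, map_mul]
    rfl
  have hr : π r ≠ 0 := fun h =>
    hprime.ne_top ((Ideal.eq_top_iff_one P).2 ((hmem 1).2 (by simp [h])))
  have hLP : L ≤ P := fun y hy => by
    rw [← hker, RingHom.mem_ker] at hy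
    rw [hmem, hy, zero_mul]
  refine ⟨le_antisymm (fun a ha => ?_) ?_, le_antisymm (fun b hb => ?_) ?_,
    ⟨⟨hprime, hLP⟩, fun Q hQ hQP => ?_⟩⟩
  · by_contra hap
    refine hr (eq_zero_of_tmul_one_mul (a := Ideal.Quotient.mk p a)
      (fun h => hap (Ideal.Quotient.eq_zero_iff_mem.1 h)) ?_)
    simpa [π] using (hmem _).1 (Ideal.mem_comap.1 ha)
  · exact Ideal.map_le_iff_le_comap.1 ((le_sup_left.trans hL.ge).trans hLP)
  · by_contra hbq
    refine hr (eq_zero_of_one_tmul_mul (b := Ideal.Quotient.mk q b)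
      (fun h => hbq (Ideal.Quotient.eq_zero_iff_mem.1 h)) ?_)
    simpa [π] using (hmem _).1 (Ideal.mem_comap.1 hb)
  · exact Ideal.map_le_iff_le_comap.1 ((le_sup_right.trans hL.ge).trans hLP)
  · have := hQ.1
    have hkQ : RingHom.ker π ≤ Q := hker.trans_le hQ.2
    have : (Q.map π).IsPrime := Ideal.map_isPrime_of_surjective hπ hkQ
    have hle : P.map π ≤ Q.map π := by
      refine le_of_prime_le_of_annihilates (Ideal.map_mono hQP) hr fun y hy => ?_
      obtain ⟨y, hyP, rfl⟩ := (Ideal.mem_map_iff_of_surjective π hπ).1 hy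
      exact (hmem y).1 hyP
    have h2 := Ideal.map_le_iff_le_comap.1 hle
    rwa [Ideal.comap_map_of_surjective π hπ, ← RingHom.ker_eq_comap_bot, sup_eq_left.2 hkQ] at h2

end SumOfPrimes

/-- **Lemma 2.3**: let `A`, `B` be Noetherian algebras over a field `k` with `R = A ⊗ₖ B`
Noetherian, `p ⊆ A` and `q ⊆ B` prime ideals, and `P` an associated prime of `R/(pR + qR)`.
Then `P ∩ A = p`, `P ∩ B = q`, and `P` is a minimal prime of `pR + qR`; in particular
`Ass_R(R/(pR+qR)) = Min_R(R/(pR+qR))`. -/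
theorem associatedPrimes_sum_of_primes
    {k A B : Type} [Field k] [CommRing A] [CommRing B] [Algebra k A] [Algebra k B]
    [IsNoetherianRing A] [IsNoetherianRing B] [IsNoetherianRing (A ⊗[k] B)]
    (p : Ideal A) (q : Ideal B) [p.IsPrime] [q.IsPrime]
    (L : Ideal (A ⊗[k] B))
    (hL : L = Ideal.map (Algebra.TensorProduct.includeLeft : A →ₐ[k] A ⊗[k] B) p +
              Ideal.map (Algebra.TensorProduct.includeRight : B →ₐ[k] A ⊗[k] B) q)
    (P : Ideal (A ⊗[k] B)) (hP : P ∈ associatedPrimes (A ⊗[k] B) (A ⊗[k] B ⧸ L)) :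
    Ideal.comap (Algebra.TensorProduct.includeLeft : A →ₐ[k] A ⊗[k] B) P = p ∧
    Ideal.comap (Algebra.TensorProduct.includeRight : B →ₐ[k] A ⊗[k] B) P = q ∧
    P ∈ L.minimalPrimes ∧
    associatedPrimes (A ⊗[k] B) (A ⊗[k] B ⧸ L) = L.minimalPrimes := by
  have main := SumOfPrimes.contractions_and_minimal p q L hL
  obtain ⟨h₁, h₂, h₃⟩ := main P hP
  refine ⟨h₁, h₂, h₃, Set.Subset.antisymm (fun P' hP' => (main P' hP').2.2) ?_⟩
  have h := Module.associatedPrimes.minimalPrimes_annihilator_subset_associatedPrimes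
    (A ⊗[k] B) (A ⊗[k] B ⧸ L)
  rwa [Ideal.annihilator_quotient] at h
end
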